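/- arXiv:0906.4177 — 2 statements merged into one kernel-verified Lean document; each statement's English description precedes it below -/
import Mathlib

section
/- Assume the Riemann Hypothesis. Then for every real x with log x ≥ 20, Σ_{2 ≤ n ≤ x} Λ(n)/( n^{1/2 + 1/(2 log x)} · log n ) · (log(x/n)/log x) ≤ 3.675 · x^{1/2}/(log x)². -/
/-- The sieve-type combination of sums used in the proof. -/
noncomputable def combo (u : ℕ → ℝ) (C : ℕ) : ℝ :=
  ∑ k ∈ Finset.range (12 * C), u (k + 1) - ∑ k ∈ Finset.range (6 * C), u (2 * (k + 1))
    - ∑ k ∈ Finset.range (4 * C), u (3 * (k + 1))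
    - (1 + 0.0325) * ∑ k ∈ Finset.range (2 * C), u (6 * (k + 1))
    + 2 * 0.0325 * ∑ k ∈ Finset.range C, u (12 * (k + 1))

theorem combo_succ (u : ℕ → ℝ) (C : ℕ) :
    combo u (C + 1) = combo u C + (u (12 * C + 1) + u (12 * C + 5) - (2 + 0.0325) * u (12 * C + 6)
      + u (12 * C + 7) + u (12 * C + 11) - (2 - 0.0325) * u (12 * C + 12)) := by
  unfold combo
  have e1 : 12 * (C + 1) = 12 * C + 1 + 1 + 1 + 1 + 1 + 1 + 1 + 1 + 1 + 1 + 1 + 1 := by ring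
  have e2 : 6 * (C + 1) = 6 * C + 1 + 1 + 1 + 1 + 1 + 1 := by ring
  have e3 : 4 * (C + 1) = 4 * C + 1 + 1 + 1 + 1 := by ring
  have e4 : 2 * (C + 1) = 2 * C + 1 + 1 := by ring
  rw [e2, e3, e4]
  conv_lhs => rw [show Finset.range (12 * (C + 1)) = Finset.range (12 * C + 1 + 1 + 1 + 1 + 1 + 1 + 1 + 1 + 1 + 1 + 1 + 1) by rw [e1]]
  simp only [Finset.sum_range_succ]
  ring_nf

theorem combo_zero (u : ℕ → ℝ) : combo u 0 = 0 := by simp [combo]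

theorem combo_lower (u : ℕ → ℝ) (hc : ∀ j k, 1 ≤ j → 2 * u (j + k) ≤ u j + u (j + 2 * k))
    (C : ℕ) :
    u 1 + (u 5 - (2 + 0.0325) * u 6 + u 7 + 0.0325 / 2 * u 12) + 0.0325 / 2 * u (12 * (C + 1))
      - u (12 * (C + 1) + 1) ≤ combo u (C + 1) := by
  induction C with
  | zero =>
    rw [combo_succ, combo_zero]
    have := hc 11 1 (by norm_num)
    norm_num at this ⊢
    linarith
  | succ C ih =>
    rw [combo_succ]
    have h1 := hc (12 * (C + 1) + 5) 1 (by omega)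
    have h2 := hc (12 * (C + 1) + 11) 1 (by omega)
    have h3 := hc (12 * (C + 1)) 6 (by omega)
    have e : 12 * (C + 1 + 1) = 12 * (C + 1) + 12 := by ring
    rw [e]
    simp only [add_assoc] at *
    norm_num at *
    linarith

theorem combo_upper (u : ℕ → ℝ) (hD : ∀ j k, 1 ≤ j → j ≤ k → u k - u (k + 1) ≤ u j - u (j + 1))
    (ha : ∀ j k, 1 ≤ j → j ≤ k → u k ≤ u j) (C : ℕ) :
    combo u (C + 1) + u (12 * (C + 1) + 1) ≤
      u 1 + (u 5 - u 6) - (u (12 * (C + 1)) - u (12 * (C + 1) + 1)) := by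
  induction C with
  | zero =>
    rw [combo_succ, combo_zero]
    have := hD 6 11 (by norm_num) (by norm_num)
    have h2 := ha 6 12 (by norm_num) (by norm_num)
    norm_num at this ⊢
    linarith
  | succ C ih =>
    rw [combo_succ]
    have h1 := hD (12 * (C + 1)) (12 * (C + 1) + 5) (by omega) (by omega)
    have h2 := hD (12 * (C + 1) + 6) (12 * (C + 1) + 11) (by omega) (by omega)
    have h3 := ha (12 * (C + 1) + 6) (12 * (C + 1) + 12) (by omega) (by omega)
    have e : 12 * (C + 1 + 1) = 12 * (C + 1) + 12 := by ring
    rw [e]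
    simp only [add_assoc] at *
    norm_num at *
    linarith

theorem twelve_six (u : ℕ → ℝ) (ha : ∀ j k, 1 ≤ j → j ≤ k → u k ≤ u j) (C : ℕ) :
    ∑ k ∈ Finset.range (2 * C), u (6 * (k + 1)) - u 6 + u (12 * C + 6) ≤
      2 * ∑ k ∈ Finset.range C, u (12 * (k + 1)) := by
  induction C with
  | zero => simp
  | succ C ih =>
    have e4 : 2 * (C + 1) = 2 * C + 1 + 1 := by ring
    rw [e4]
    simp only [Finset.sum_range_succ]
    have h3 := ha (12 * C + 12) (12 * C + 18) (by omega) (by omega)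
    have e1 : 6 * (2 * C + 1) = 12 * C + 6 := by ring
    have e2 : 6 * (2 * C + 1 + 1) = 12 * C + 12 := by ring
    have e3 : 12 * (C + 1) + 6 = 12 * C + 18 := by ring
    have e5 : 12 * (C + 1) = 12 * C + 12 := by ring
    rw [e1, e2, e3, e5]
    linarith

theorem rearr (G : ℕ → ℝ) (R M : ℕ) (hG : ∀ k, R < k → G k = 0) (hM : R ≤ M) :
    ∑ n ∈ Finset.Icc 1 R, ArithmeticFunction.vonMangoldt n * ∑ i ∈ Finset.range M, G (n * (i + 1))
      = ∑ k ∈ Finset.range M, Real.log ((k + 1 : ℕ) : ℝ) * G (k + 1) := by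
  have h1 : ∀ k ∈ Finset.range M, Real.log ((k + 1 : ℕ) : ℝ) * G (k + 1) =
      ∑ n ∈ Finset.Icc 1 R, if n ∣ k + 1 then ArithmeticFunction.vonMangoldt n * G (k + 1) else 0 := by
    intro k hk
    by_cases hk2 : R < k + 1
    · rw [hG _ hk2]; simp
    · rw [← ArithmeticFunction.vonMangoldt_sum, Finset.sum_mul, ← Finset.sum_filter]
      apply Finset.sum_congr _ (fun _ _ => rfl)
      ext n
      simp only [Nat.mem_divisors, Finset.mem_filter, Finset.mem_Icc]
      constructor
      · rintro ⟨h, -⟩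
        have := Nat.le_of_dvd (by omega) h
        have := Nat.pos_of_dvd_of_pos h (by omega)
        exact ⟨by omega, h⟩
      · rintro ⟨_, h⟩
        exact ⟨h, by omega⟩
  rw [Finset.sum_congr rfl h1, Finset.sum_comm]
  apply Finset.sum_congr rfl
  intro n hn
  rw [Finset.mem_Icc] at hn
  rw [Finset.mul_sum, ← Finset.sum_filter]
  have hz : ∑ i ∈ Finset.range M, ArithmeticFunction.vonMangoldt n * G (n * (i + 1)) =
      ∑ i ∈ (Finset.range M).filter (fun i => n * (i + 1) ≤ M), ArithmeticFunction.vonMangoldt n * G (n * (i + 1)) := by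
    rw [Finset.sum_filter]
    apply Finset.sum_congr rfl
    intro i _
    split_ifs with h
    · rfl
    · rw [hG _ (by omega)]; simp
  rw [hz]
  refine Finset.sum_bij (fun i _ => n * (i + 1) - 1) ?_ ?_ ?_ ?_
  · intro i hi
    simp only [Finset.mem_filter, Finset.mem_range] at hi ⊢
    have : 0 < n * (i + 1) := by apply Nat.mul_pos <;> omega
    rw [Nat.sub_add_cancel this]
    exact ⟨by omega, dvd_mul_right _ _⟩
  · intro i hi j hj h
    have h1 : 0 < n * (i + 1) := by apply Nat.mul_pos <;> omega
    have h2 : 0 < n * (j + 1) := by apply Nat.mul_pos <;> omega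
    have h3 : n * (i + 1) = n * (j + 1) := by
      omega
    have := Nat.eq_of_mul_eq_mul_left (by omega) h3
    omega
  · intro k hk
    simp only [Finset.mem_filter, Finset.mem_range] at hk
    obtain ⟨hk, q, hq⟩ := hk
    have hq0 : 0 < q := by
      rcases Nat.eq_zero_or_pos q with h | h
      · subst h; omega
      · exact h
    have : q ≤ n * q := Nat.le_mul_of_pos_left _ (by omega)
    refine ⟨q - 1, ?_, ?_⟩
    · simp only [Finset.mem_filter, Finset.mem_range]
      rw [Nat.sub_add_cancel hq0]
      omega
    · rw [Nat.sub_add_cancel hq0]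
      omega
  · intro i hi
    have h1 : 0 < n * (i + 1) := by apply Nat.mul_pos <;> omega
    rw [Nat.sub_add_cancel h1]


/-- Nonneg, antitone and convex on a set. -/
structure NAC (s : Set ℝ) (f : ℝ → ℝ) : Prop where
  conv : ConvexOn ℝ s f
  anti : AntitoneOn f s
  nn : ∀ x ∈ s, 0 ≤ f x

theorem NAC.mul {s : Set ℝ} {f g : ℝ → ℝ} (hf : NAC s f) (hg : NAC s g) :
    NAC s (fun x => f x * g x) := by
  refine ⟨?_, ?_, fun x hx => mul_nonneg (hf.nn x hx) (hg.nn x hx)⟩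
  · refine ConvexOn.mul hf.conv hg.conv (fun x hx => hf.nn x hx) (fun x hx => hg.nn x hx) ?_
    intro i hi j hj h
    rcases le_total i j with h1 | h1
    · exact absurd (hg.anti hi hj h1) (not_le.mpr h)
    · exact hf.anti hj hi h1
  · intro i hi j hj h
    exact mul_le_mul (hf.anti hi hj h) (hg.anti hi hj h) (hg.nn _ hj) (hf.nn _ hi)

theorem NAC.max0 {s : Set ℝ} {f : ℝ → ℝ} (hf : ConvexOn ℝ s f) (ha : AntitoneOn f s) :
    NAC s (fun x => max (f x) 0) := by
  refine ⟨?_, ?_, fun x _ => le_max_right _ _⟩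
  · exact hf.sup (convexOn_const 0 hf.1)
  · intro i hi j hj h
    exact max_le_max (ha hi hj h) le_rfl

theorem NAC.mono {s t : Set ℝ} {f : ℝ → ℝ} (hf : NAC s f) (h : t ⊆ s) (ht : Convex ℝ t) : NAC t f :=
  ⟨hf.conv.subset h ht, hf.anti.mono h, fun x hx => hf.nn x (h hx)⟩

theorem NAC.comp_log {f : ℝ → ℝ} (hf : NAC (Set.Ioi 0) f) :
    NAC (Set.Ioi 1) (fun x => f (Real.log x)) := by
  have hc : ConcaveOn ℝ (Set.Ioi (1:ℝ)) Real.log :=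
    (strictConcaveOn_log_Ioi.concaveOn).subset (Set.Ioi_subset_Ioi zero_le_one) (convex_Ioi 1)
  have hpos : ∀ x ∈ Set.Ioi (1:ℝ), Real.log x ∈ Set.Ioi (0:ℝ) := fun x hx => Real.log_pos hx
  have hlm : ∀ x ∈ Set.Ioi (1:ℝ), ∀ y ∈ Set.Ioi (1:ℝ), x ≤ y → Real.log x ≤ Real.log y :=
    fun x hx y _ h => Real.log_le_log (lt_trans zero_lt_one hx) h
  refine ⟨⟨convex_Ioi 1, ?_⟩, ?_, fun x hx => hf.nn _ (hpos x hx)⟩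
  · intro x hx y hy a b ha hb hab
    have hm := hc.1 hx hy ha hb hab
    refine le_trans (hf.anti (hf.conv.1 (hpos x hx) (hpos y hy) ha hb hab) (hpos _ hm) (hc.2 hx hy ha hb hab)) ?_
    exact hf.conv.2 (hpos x hx) (hpos y hy) ha hb hab
  · intro x hx y hy h
    exact hf.anti (hpos x hx) (hpos y hy) (hlm x hx y hy h)

theorem NAC.exp_lin (c : ℝ) (hc : 0 ≤ c) : NAC Set.univ (fun x => Real.exp (-(c * x))) := by
  refine ⟨?_, ?_, fun x _ => (Real.exp_pos _).le⟩
  · refine ⟨convex_univ, ?_⟩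
    intro x _ y _ a b ha hb hab
    have := convexOn_exp.2 (Set.mem_univ (-(c*x))) (Set.mem_univ (-(c*y))) ha hb hab
    simp only [smul_eq_mul] at *
    convert this using 2
    ring
  · intro x _ y _ h
    exact Real.exp_le_exp.mpr (by nlinarith)

theorem NAC.exp_log (c : ℝ) (hc : 0 ≤ c) :
    NAC (Set.Ioi 0) (fun x => Real.exp (-(c * Real.log x))) := by
  have hlog : ConcaveOn ℝ (Set.Ioi (0:ℝ)) Real.log := strictConcaveOn_log_Ioi.concaveOn
  have he := NAC.exp_lin c hc
  refine ⟨⟨convex_Ioi 0, ?_⟩, ?_, fun x _ => (Real.exp_pos _).le⟩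
  · intro x hx y hy a b ha hb hab
    refine le_trans (he.anti (Set.mem_univ _) (Set.mem_univ _) (hlog.2 hx hy ha hb hab)) ?_
    exact he.conv.2 (Set.mem_univ _) (Set.mem_univ _) ha hb hab
  · intro x hx y hy h
    exact he.anti (Set.mem_univ _) (Set.mem_univ _) (Real.log_le_log hx h)

/-- The weight in the logarithmic variable. -/
noncomputable def phiL (L v : ℝ) : ℝ := Real.exp (-(1 / (2 * L) * v)) * max (1 / v - 1 / L) 0

/-- The weight. -/
noncomputable def FL (L t : ℝ) : ℝ := Real.exp (-((1 / 2 + 1 / (2 * L)) * Real.log t)) *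
  max (1 / Real.log t - 1 / L) 0

/-- The weight multiplied by the logarithm. -/
noncomputable def hL (L t : ℝ) : ℝ := Real.exp (-((1 / 2 + 1 / (2 * L)) * Real.log t)) *
  max (1 - Real.log t / L) 0

theorem phiL_nac (L : ℝ) (hL : 0 < L) : NAC (Set.Ioi 0) (phiL L) := by
  unfold phiL
  refine NAC.mul ((NAC.exp_lin (1 / (2 * L)) (by positivity)).mono (Set.subset_univ _) (convex_Ioi 0)) ?_
  apply NAC.max0
  · have h1 : ConvexOn ℝ (Set.Ioi (0:ℝ)) (fun v : ℝ => 1 / v) := by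
      have := convexOn_zpow (𝕜 := ℝ) (-1)
      simpa using this
    refine (h1.add_const (-(1 / L))).congr ?_
    intro x _
    simp only [Pi.add_apply]
    ring
  · intro x hx y hy h
    have : 1 / y ≤ 1 / x := one_div_le_one_div_of_le hx h
    simp only; linarith

theorem FL_eq (L t : ℝ) : FL L t = Real.exp (-(1 / 2 * Real.log t)) * phiL L (Real.log t) := by
  unfold FL phiL
  rw [← mul_assoc, ← Real.exp_add]
  congr 2
  ring

theorem FL_nac (L : ℝ) (hL : 0 < L) : NAC (Set.Ioi 1) (FL L) := by
  have : FL L = fun t => Real.exp (-(1 / 2 * Real.log t)) * phiL L (Real.log t) := by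
    ext t; exact FL_eq L t
  rw [this]
  refine NAC.mul ((NAC.exp_log (1 / 2) (by norm_num)).mono ?_ (convex_Ioi 1)) (phiL_nac L hL).comp_log
  exact Set.Ioi_subset_Ioi zero_le_one

theorem hL_nac (L : ℝ) (hL' : 0 < L) : NAC (Set.Ioi 0) (hL L) := by
  unfold hL
  refine NAC.mul (NAC.exp_log _ (by positivity)) (NAC.max0 ?_ ?_)
  · have hlog : ConcaveOn ℝ (Set.Ioi (0:ℝ)) Real.log := strictConcaveOn_log_Ioi.concaveOn
    have h1 := (hlog.smul (c := 1 / L) (by positivity)).neg.add_const 1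
    refine h1.congr ?_
    intro x _
    simp only [Pi.add_apply, Pi.neg_apply, smul_eq_mul]
    ring
  · intro x hx y hy h
    have := Real.log_le_log hx h
    have : Real.log x / L ≤ Real.log y / L := by gcongr
    simp only; linarith

theorem FL_nonneg (L t : ℝ) : 0 ≤ FL L t := mul_nonneg (Real.exp_pos _).le (le_max_right _ _)
theorem hL_nonneg (L t : ℝ) : 0 ≤ hL L t := mul_nonneg (Real.exp_pos _).le (le_max_right _ _)

theorem FL_zero (L t : ℝ) (h0 : 0 < L) (ht : L ≤ Real.log t) : FL L t = 0 := by
  unfold FL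
  have : 1 / Real.log t ≤ 1 / L := one_div_le_one_div_of_le h0 ht
  rw [max_eq_right (by linarith), mul_zero]

theorem hL_zero (L t : ℝ) (h0 : 0 < L) (ht : L ≤ Real.log t) : hL L t = 0 := by
  unfold hL
  have : 1 ≤ Real.log t / L := by rw [le_div_iff₀ h0]; linarith
  rw [max_eq_right (by linarith), mul_zero]

theorem log_mul_FL (L t : ℝ) (ht : 1 < t) : Real.log t * FL L t = hL L t := by
  have h := Real.log_pos ht
  unfold FL hL
  have : max (1 - Real.log t / L) 0 = Real.log t * max (1 / Real.log t - 1 / L) 0 := by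
    rw [mul_max_of_nonneg _ _ h.le]
    congr 1
    · field_simp
    · ring
  rw [this]; ring

theorem log_mul_FL_le (L t : ℝ) (ht : 1 ≤ t) : Real.log t * FL L t ≤ hL L t := by
  rcases eq_or_lt_of_le ht with h | h
  · rw [← h, Real.log_one, zero_mul]; exact hL_nonneg _ _
  · exact (log_mul_FL L t h).le

/-- sequence consequences -/
theorem NAC.seq_conv {s : Set ℝ} {f : ℝ → ℝ} (hf : NAC s f) (x y : ℝ) (hx : x ∈ s) (hy : y ∈ s) :
    2 * f ((x + y) / 2) ≤ f x + f y := by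
  have := hf.conv.2 hx hy (show (0:ℝ) ≤ 1 / 2 by norm_num) (show (0:ℝ) ≤ 1 / 2 by norm_num)
    (by norm_num)
  simp only [smul_eq_mul] at this
  rw [show 1 / 2 * x + 1 / 2 * y = (x + y) / 2 by ring] at this
  linarith

theorem seqD {u : ℕ → ℝ} (hc : ∀ j, 1 ≤ j → 2 * u (j + 1) ≤ u j + u (j + 2)) (j k : ℕ) (hj : 1 ≤ j)
    (hjk : j ≤ k) : u k - u (k + 1) ≤ u j - u (j + 1) := by
  induction k, hjk using Nat.le_induction with
  | base => exact le_rfl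
  | succ k hk ih =>
    have := hc k (by omega)
    linarith


theorem exp_half_log_sq (j : ℝ) (hj : 0 < j) : Real.exp (-(1 / 2 * Real.log j)) ^ 2 = 1 / j := by
  rw [← Real.exp_nat_mul, show ((2:ℕ):ℝ) * -(1 / 2 * Real.log j) = - Real.log j by push_cast; ring,
    Real.exp_neg, Real.exp_log hj, one_div]

theorem exp_half_log_ge (j c : ℝ) (hj : 0 < j) (h : c ^ 2 ≤ 1 / j) :
    c ≤ Real.exp (-(1 / 2 * Real.log j)) := by
  have h1 := exp_half_log_sq j hj
  have h2 := Real.exp_pos (-(1 / 2 * Real.log j))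
  exact le_of_sq_le_sq (by rw [h1]; exact h) h2.le

theorem exp_half_log_le (j c : ℝ) (hj : 0 < j) (hc : 0 ≤ c) (h : 1 / j ≤ c ^ 2) :
    Real.exp (-(1 / 2 * Real.log j)) ≤ c := by
  have h1 := exp_half_log_sq j hj
  exact le_of_sq_le_sq (by rw [h1]; exact h) hc

theorem log_ineq1 : 0.46 * Real.log 5 + 0.54 * Real.log 7 ≤ Real.log 6 := by
  have h : Real.log ((5:ℝ) ^ 23 * 7 ^ 27) ≤ Real.log ((6:ℝ) ^ 50) :=
    Real.log_le_log (by norm_num) (by norm_num)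
  rw [Real.log_mul (by norm_num) (by norm_num), Real.log_pow, Real.log_pow, Real.log_pow] at h
  push_cast at h
  linarith

theorem log_ineq2 : 2 / 3 * Real.log 5 + 1 / 3 * Real.log 12 ≤ Real.log 7 := by
  have h : Real.log ((5:ℝ) ^ 2 * 12) ≤ Real.log ((7:ℝ) ^ 3) :=
    Real.log_le_log (by norm_num) (by norm_num)
  rw [Real.log_mul (by norm_num) (by norm_num), Real.log_pow, Real.log_pow] at h
  push_cast at h
  linarith

theorem NAC.comb {f : ℝ → ℝ} (hf : NAC (Set.Ioi 0) f) (x y w p q : ℝ) (hx : 0 < x) (hy : 0 < y)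
    (hp : 0 ≤ p) (hq : 0 ≤ q) (hpq : p + q = 1) (h : p * x + q * y ≤ w) :
    f w ≤ p * f x + q * f y := by
  have hm : p * x + q * y ∈ Set.Ioi (0:ℝ) := (convex_Ioi (0:ℝ)) hx hy hp hq hpq
  exact le_trans (hf.anti hm (lt_of_lt_of_le hm h) h) (hf.conv.2 hx hy hp hq hpq)

theorem P_cond (L n : ℝ) (hL : 0 < L) (hn : 2 ≤ n) :
    0 ≤ FL L (n * 5) - (2 + 0.0325) * FL L (n * 6) + FL L (n * 7) + 0.0325 / 2 * FL L (n * 12) := by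
  have hy : 0 < Real.log n := Real.log_pos (by linarith)
  have hF : ∀ j : ℝ, 1 < j → FL L (n * j) = Real.exp (-(1 / 2 * Real.log n)) *
      (Real.exp (-(1 / 2 * Real.log j)) * phiL L (Real.log j + Real.log n)) := by
    intro j hj
    rw [FL_eq, Real.log_mul (by linarith) (by linarith), ← mul_assoc, ← Real.exp_add,
      add_comm (Real.log j)]
    congr 2
    ring
  rw [hF 5 (by norm_num), hF 6 (by norm_num), hF 7 (by norm_num), hF 12 (by norm_num)]
  have hphi := phiL_nac L hL
  have v5 : 0 < Real.log 5 + Real.log n := by have := Real.log_pos (show (1:ℝ) < 5 by norm_num); linarith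
  have v7 : 0 < Real.log 7 + Real.log n := by have := Real.log_pos (show (1:ℝ) < 7 by norm_num); linarith
  have v12 : 0 < Real.log 12 + Real.log n := by have := Real.log_pos (show (1:ℝ) < 12 by norm_num); linarith
  have a1 := hphi.comb _ _ (Real.log 6 + Real.log n) 0.46 0.54 v5 v7 (by norm_num) (by norm_num)
    (by norm_num) (by have := log_ineq1; linarith)
  have a2 := hphi.comb _ _ (Real.log 7 + Real.log n) (2 / 3) (1 / 3) v5 v12 (by norm_num) (by norm_num)
    (by norm_num) (by have := log_ineq2; linarith)
  have a3 := hphi.anti v5 v12 (by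
    have := Real.log_le_log (show (0:ℝ) < 5 by norm_num) (show (5:ℝ) ≤ 12 by norm_num); linarith)
  have a4 := hphi.nn _ v12
  have a5 := hphi.nn _ v5
  have a7 := hphi.nn _ v7
  have v6 : 0 < Real.log 6 + Real.log n := by have := Real.log_pos (show (1:ℝ) < 6 by norm_num); linarith
  have a6 := hphi.nn _ v6
  generalize phiL L (Real.log 5 + Real.log n) = f5 at *
  generalize phiL L (Real.log 6 + Real.log n) = f6 at *
  generalize phiL L (Real.log 7 + Real.log n) = f7 at *
  generalize phiL L (Real.log 12 + Real.log n) = f12 at *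
  have b5 := mul_le_mul_of_nonneg_right (exp_half_log_ge 5 0.44721 (by norm_num) (by norm_num)) a5
  have b6 := mul_le_mul_of_nonneg_right (exp_half_log_le 6 0.40825 (by norm_num) (by norm_num) (by norm_num)) a6
  have b7 := mul_le_mul_of_nonneg_right (exp_half_log_ge 7 0.37796 (by norm_num) (by norm_num)) a7
  have b12 := mul_le_mul_of_nonneg_right (exp_half_log_ge 12 0.28867 (by norm_num) (by norm_num)) a4
  have key : 0 ≤ Real.exp (-(1 / 2 * Real.log 5)) * f5 - (2 + 0.0325) * (Real.exp (-(1 / 2 * Real.log 6)) * f6)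
     + Real.exp (-(1 / 2 * Real.log 7)) * f7 + 0.0325 / 2 * (Real.exp (-(1 / 2 * Real.log 12)) * f12) := by
    linarith
  have := mul_nonneg (Real.exp_pos (-(1 / 2 * Real.log n))).le key
  linarith

theorem pointwise (L : ℝ) (hL : 0 < L) (n C : ℕ) (hn : 2 ≤ n)
    (hz : FL L ((n * (12 * (C + 1) + 1) : ℕ) : ℝ) = 0) :
    FL L (n : ℝ) ≤ combo (fun j => FL L ((n * j : ℕ) : ℝ)) (C + 1) := by
  have hF := FL_nac L hL
  have hn' : (2:ℝ) ≤ n := by exact_mod_cast hn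
  have h := combo_lower (fun j => FL L ((n * j : ℕ) : ℝ)) (by
    intro j k hj
    have hj' : (1:ℝ) ≤ j := by exact_mod_cast hj
    have := hF.seq_conv ((n * j : ℕ) : ℝ) ((n * (j + 2 * k) : ℕ) : ℝ)
      (by simp only [Set.mem_Ioi]; push_cast; nlinarith)
      (by simp only [Set.mem_Ioi]; push_cast
          have : (0:ℝ) ≤ n * k := by positivity
          nlinarith)
    convert this using 3
    push_cast; ring) C
  have hP := P_cond L n hL hn'
  have h12 := FL_nonneg L ((n * (12 * (C + 1)) : ℕ) : ℝ)
  rw [hz] at h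
  push_cast at h h12 ⊢
  rw [mul_one] at h
  have : 0.0325 / 2 * FL L (n * (12 * (C + 1))) ≥ 0 := by positivity
  linarith

theorem sum_combo (L : ℝ) (N C : ℕ) (hz : ∀ k : ℕ, N < k → FL L (k : ℝ) = 0) (hC : N ≤ C) :
    ∑ n ∈ Finset.Icc 1 N, ArithmeticFunction.vonMangoldt n * combo (fun j => FL L ((n * j : ℕ) : ℝ)) C
     = ∑ k ∈ Finset.range (12 * C), Real.log ((k + 1 : ℕ) : ℝ) * FL L ((k + 1 : ℕ) : ℝ)
     - ∑ k ∈ Finset.range (6 * C), Real.log ((k + 1 : ℕ) : ℝ) * FL L ((2 * (k + 1) : ℕ) : ℝ)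
     - ∑ k ∈ Finset.range (4 * C), Real.log ((k + 1 : ℕ) : ℝ) * FL L ((3 * (k + 1) : ℕ) : ℝ)
     - (1 + 0.0325) * ∑ k ∈ Finset.range (2 * C), Real.log ((k + 1 : ℕ) : ℝ) * FL L ((6 * (k + 1) : ℕ) : ℝ)
     + 2 * 0.0325 * ∑ k ∈ Finset.range C, Real.log ((k + 1 : ℕ) : ℝ) * FL L ((12 * (k + 1) : ℕ) : ℝ) := by
  have key : ∀ d M : ℕ, 1 ≤ d → N ≤ M →
      ∑ k ∈ Finset.range M, Real.log ((k + 1 : ℕ) : ℝ) * FL L ((d * (k + 1) : ℕ) : ℝ) =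
      ∑ n ∈ Finset.Icc 1 N, ArithmeticFunction.vonMangoldt n *
        ∑ k ∈ Finset.range M, FL L ((n * (d * (k + 1)) : ℕ) : ℝ) := by
    intro d M hd hM
    rw [← rearr (fun m => FL L ((d * m : ℕ) : ℝ)) N M (by
      intro k hk
      exact hz _ (lt_of_lt_of_le hk (Nat.le_mul_of_pos_left _ hd))) hM]
    apply Finset.sum_congr rfl
    intro n _
    congr 1
    apply Finset.sum_congr rfl
    intro k _
    rw [show d * (n * (k + 1)) = n * (d * (k + 1)) by ring]
  have k1 := key 1 (12 * C) (by norm_num) (by omega)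
  simp only [one_mul] at k1
  rw [k1, key 2 (6 * C) (by norm_num) (by omega), key 3 (4 * C) (by norm_num) (by omega),
    key 6 (2 * C) (by norm_num) (by omega), key 12 C (by norm_num) (by omega)]
  rw [Finset.mul_sum, Finset.mul_sum, ← Finset.sum_sub_distrib, ← Finset.sum_sub_distrib,
    ← Finset.sum_sub_distrib, ← Finset.sum_add_distrib]
  apply Finset.sum_congr rfl
  intro n _
  unfold combo
  ring

theorem main_split (L : ℝ) (hL0 : 0 < L) (N C : ℕ) (hz : ∀ k : ℕ, N < k → FL L (k : ℝ) = 0)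
    (hC : N ≤ C + 1) :
    ∑ n ∈ Finset.Icc 2 N, ArithmeticFunction.vonMangoldt n * FL L n ≤
      combo (fun j => hL L (j : ℝ)) (C + 1)
      + Real.log 2 * ∑ k ∈ Finset.range (6 * (C + 1)), FL L ((2 * (k + 1) : ℕ) : ℝ)
      + Real.log 3 * ∑ k ∈ Finset.range (4 * (C + 1)), FL L ((3 * (k + 1) : ℕ) : ℝ)
      + (1 + 0.0325) * Real.log 6 * ∑ k ∈ Finset.range (2 * (C + 1)), FL L ((6 * (k + 1) : ℕ) : ℝ)
      - 2 * 0.0325 * Real.log 12 * ∑ k ∈ Finset.range (C + 1), FL L ((12 * (k + 1) : ℕ) : ℝ) := by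
  have h1 : ∑ n ∈ Finset.Icc 2 N, ArithmeticFunction.vonMangoldt n * FL L n ≤
      ∑ n ∈ Finset.Icc 1 N, ArithmeticFunction.vonMangoldt n *
        combo (fun j => FL L ((n * j : ℕ) : ℝ)) (C + 1) := by
    calc _ ≤ ∑ n ∈ Finset.Icc 2 N, ArithmeticFunction.vonMangoldt n *
        combo (fun j => FL L ((n * j : ℕ) : ℝ)) (C + 1) := by
          apply Finset.sum_le_sum
          intro n hn
          rw [Finset.mem_Icc] at hn
          apply mul_le_mul_of_nonneg_left _ ArithmeticFunction.vonMangoldt_nonneg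
          apply pointwise L hL0 n C hn.1
          apply hz
          nlinarith
      _ = _ := by
          apply Finset.sum_subset
          · exact Finset.Icc_subset_Icc (by norm_num) le_rfl
          · intro n hn hn2
            simp only [Finset.mem_Icc] at hn hn2
            have : n = 1 := by omega
            subst this
            rw [ArithmeticFunction.vonMangoldt_apply_one, zero_mul]
  rw [sum_combo L N (C + 1) hz hC] at h1
  have key : ∀ d M : ℕ, 2 ≤ d → 
      ∑ k ∈ Finset.range M, Real.log ((k + 1 : ℕ) : ℝ) * FL L ((d * (k + 1) : ℕ) : ℝ) =
      ∑ k ∈ Finset.range M, hL L ((d * (k + 1) : ℕ) : ℝ) - Real.log d *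
        ∑ k ∈ Finset.range M, FL L ((d * (k + 1) : ℕ) : ℝ) := by
    intro d M hd
    rw [Finset.mul_sum, ← Finset.sum_sub_distrib]
    apply Finset.sum_congr rfl
    intro k _
    have hgt : (1:ℝ) < ((d * (k + 1) : ℕ) : ℝ) := by
      have : 1 < d * (k + 1) := by nlinarith
      exact_mod_cast this
    rw [← log_mul_FL L _ hgt]
    have : Real.log ((d * (k + 1) : ℕ) : ℝ) = Real.log d + Real.log ((k + 1 : ℕ) : ℝ) := by
      rw [Nat.cast_mul, Real.log_mul]
      · positivity
      · positivity
    rw [this]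
    ring
  have key1 : ∑ k ∈ Finset.range (12 * (C + 1)), Real.log ((k + 1 : ℕ) : ℝ) * FL L ((k + 1 : ℕ) : ℝ)
      ≤ ∑ k ∈ Finset.range (12 * (C + 1)), hL L ((k + 1 : ℕ) : ℝ) := by
    apply Finset.sum_le_sum
    intro k _
    apply log_mul_FL_le
    push_cast
    have : (0:ℝ) ≤ k := by positivity
    linarith
  rw [key 2 _ (by norm_num), key 3 _ (by norm_num), key 6 _ (by norm_num), key 12 _ (by norm_num)] at h1
  unfold combo
  simp only [Nat.cast_ofNat] at h1
  linarith


theorem h5h6 (L : ℝ) (h20 : 20 ≤ L) : hL L 5 - hL L 6 ≤ 0.047 := by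
  have l2 := Real.log_two_lt_d9
  have l3 := Real.log_three_lt_d9
  have l5 := Real.log_five_gt_d9
  have l5' := Real.log_five_lt_d9
  have l6 : Real.log 6 = Real.log 2 + Real.log 3 := by
    rw [← Real.log_mul (by norm_num) (by norm_num)]; norm_num
  have l56 := Real.log_le_log (show (0:ℝ) < 5 by norm_num) (show (5:ℝ) ≤ 6 by norm_num)
  unfold hL
  have hp := exp_half_log_le 5 0.4473 (by norm_num) (by norm_num) (by norm_num)
  have hL0 : 0 < L := by linarith
  have he : 1 / L ≤ 1 / 20 := one_div_le_one_div_of_le (by norm_num) h20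
  have he0 : 0 < 1 / L := by positivity
  have e2 : 1 / (2 * L) = 1 / L / 2 := by field_simp
  rw [e2, div_eq_mul_one_div (Real.log 5) L, div_eq_mul_one_div (Real.log 6) L]
  generalize 1 / L = e at *
  set δ := Real.log 6 - Real.log 5 with hδ
  have hδ0 : 0 ≤ δ := by linarith
  have hδ1 : δ ≤ 0.1824 := by linarith
  have h6 : 0 ≤ 1 - Real.log 6 * e := by nlinarith
  have h5 : 0 ≤ 1 - Real.log 5 * e := by nlinarith
  rw [max_eq_left h6, max_eq_left h5]
  have hq : Real.exp (-((1 / 2 + e / 2) * Real.log 6)) =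
      Real.exp (-((1 / 2 + e / 2) * Real.log 5)) * Real.exp (-((1 / 2 + e / 2) * δ)) := by
    rw [← Real.exp_add]; congr 1; rw [hδ]; ring
  rw [hq]
  have hq1 := Real.add_one_le_exp (-((1 / 2 + e / 2) * δ))
  have hpp : Real.exp (-((1 / 2 + e / 2) * Real.log 5)) ≤ 0.4473 := by
    refine le_trans (Real.exp_le_exp.mpr ?_) hp
    nlinarith
  have hp0 := Real.exp_pos (-((1 / 2 + e / 2) * Real.log 5))
  generalize Real.exp (-((1 / 2 + e / 2) * Real.log 5)) = p at *
  generalize Real.exp (-((1 / 2 + e / 2) * δ)) = q at *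
  have hb : (1 - Real.log 5 * e) - q * (1 - Real.log 6 * e) ≤ 0.575 * δ := by
    have h1 := mul_le_mul_of_nonneg_right hq1 h6
    have h2 : Real.log 5 = Real.log 6 - δ := by rw [hδ]; ring
    have h3 : 0 ≤ (1 / 2 + e / 2) * δ * (Real.log 6 * e) := by
      have : 0 ≤ Real.log 6 := by linarith
      positivity
    rw [h2]
    nlinarith
  calc p * (1 - Real.log 5 * e) - p * q * (1 - Real.log 6 * e)
      = p * ((1 - Real.log 5 * e) - q * (1 - Real.log 6 * e)) := by ring
    _ ≤ p * (0.575 * δ) := mul_le_mul_of_nonneg_left hb hp0.le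
    _ ≤ 0.4473 * (0.575 * δ) := mul_le_mul_of_nonneg_right hpp (by positivity)
    _ ≤ 0.047 := by linarith

theorem H_bound (L : ℝ) (h20 : 20 ≤ L) (C : ℕ) :
    combo (fun j => hL L (j : ℝ)) (C + 1) ≤ 1.047 := by
  have hn := hL_nac L (by linarith)
  have hc : ∀ j : ℕ, 1 ≤ j → 2 * hL L ((j + 1 : ℕ) : ℝ) ≤ hL L (j : ℝ) + hL L ((j + 2 : ℕ) : ℝ) := by
    intro j hj
    have := hn.seq_conv (j : ℝ) ((j + 2 : ℕ) : ℝ) (by simp only [Set.mem_Ioi]; positivity)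
      (by simp only [Set.mem_Ioi]; positivity)
    convert this using 3
    push_cast; ring
  have h := combo_upper (fun j => hL L (j : ℝ)) (fun j k hj hk => seqD (u := fun j => hL L (j : ℝ)) hc j k hj hk)
    (by
      intro j k hj hk
      apply hn.anti
      · simp only [Set.mem_Ioi]; positivity
      · have : 0 < k := by omega
        simp only [Set.mem_Ioi]; positivity
      · exact_mod_cast hk) C
  have h2 := hL_nonneg L ((12 * (C + 1) : ℕ) : ℝ)
  have h3 := h5h6 L h20
  have h1 : hL L 1 = 1 := by simp [hL]
  simp only [Nat.cast_one, Nat.cast_ofNat] at h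
  rw [h1] at h
  linarith


open MeasureTheory intervalIntegral

theorem FL_cont (L : ℝ) : ContinuousOn (FL L) (Set.Ioi 1) := by
  unfold FL
  have hlog : ContinuousOn Real.log (Set.Ioi (1:ℝ)) :=
    Real.continuousOn_log.mono (fun x hx => by
      have : (1:ℝ) < x := hx
      simp only [Set.mem_compl_iff, Set.mem_singleton_iff]; linarith)
  have hne : ∀ x ∈ Set.Ioi (1:ℝ), Real.log x ≠ 0 := fun x hx => (Real.log_pos hx).ne'
  refine ContinuousOn.mul ?_ ?_
  · exact Real.continuous_exp.comp_continuousOn ((continuousOn_const.mul hlog).neg)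
  · exact ((continuousOn_const.div hlog hne).sub continuousOn_const).sup continuousOn_const

theorem FL_int (L a b : ℝ) (ha : 1 < a) (hb : 1 < b) : IntervalIntegrable (FL L) volume a b := by
  apply ContinuousOn.intervalIntegrable
  apply (FL_cont L).mono
  intro t ht
  rw [Set.mem_uIcc] at ht
  simp only [Set.mem_Ioi]
  rcases ht with h | h <;> linarith [h.1]

theorem mid_le (L m r : ℝ) (hL : 0 < L) (hr : 0 ≤ r) (hm : 1 < m - r) :
    2 * r * FL L m ≤ ∫ t in (m - r)..(m + r), FL L t := by
  have hi := FL_int L (m - r) (m + r) hm (by linarith)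
  have h1 : ∫ t in (m - r)..(m + r), FL L (2 * m - t) = ∫ t in (m - r)..(m + r), FL L t := by
    rw [intervalIntegral.integral_comp_sub_left (fun t => FL L t) (2 * m)]
    congr 1 <;> ring
  have hi2 : IntervalIntegrable (fun t => FL L (2 * m - t)) volume (m - r) (m + r) := by
    apply ContinuousOn.intervalIntegrable
    apply (FL_cont L).comp (by fun_prop)
    intro t ht
    rw [Set.mem_uIcc] at ht
    simp only [Set.mem_Ioi]
    rcases ht with h | h <;> linarith [h.1, h.2]
  have h2 : ∫ t in (m - r)..(m + r), (2 * FL L m) ≤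
      ∫ t in (m - r)..(m + r), (FL L t + FL L (2 * m - t)) := by
    apply intervalIntegral.integral_mono_on (by linarith) (by simp) (hi.add hi2)
    intro t ht
    have := (FL_nac L hL).seq_conv t (2 * m - t) (by simp only [Set.mem_Ioi]; linarith [ht.1])
      (by simp only [Set.mem_Ioi]; linarith [ht.2])
    rw [show (t + (2 * m - t)) / 2 = m by ring] at this
    exact this
  rw [intervalIntegral.integral_add hi hi2, h1, intervalIntegral.integral_const, smul_eq_mul] at h2
  linarith

theorem sum_mid (L m d : ℝ) (hL : 0 < L) (hd : 0 < d) (hm : 1 < m - d / 2) (M : ℕ) :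
    d * ∑ k ∈ Finset.range M, FL L (m + d * k) ≤ ∫ t in (m - d / 2)..(m - d / 2 + d * M), FL L t := by
  induction M with
  | zero => simp
  | succ M ih =>
    rw [Finset.sum_range_succ, mul_add]
    have hM : 0 ≤ d * (M:ℝ) := by positivity
    have h := mid_le L (m + d * M) (d / 2) hL (by positivity) (by linarith)
    have e1 : m + d * M - d / 2 = m - d / 2 + d * M := by ring
    have e2 : m + d * M + d / 2 = m - d / 2 + d * ((M + 1 : ℕ) : ℝ) := by push_cast; ring
    rw [e1, e2] at h
    have hM2 : 0 ≤ d * ((M + 1 : ℕ) : ℝ) := by positivity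
    rw [← intervalIntegral.integral_add_adjacent_intervals
      (FL_int L (m - d / 2) (m - d / 2 + d * M) hm (by linarith))
      (FL_int L (m - d / 2 + d * M) (m - d / 2 + d * ((M + 1 : ℕ) : ℝ)) (by linarith) (by linarith))]
    linarith

/-- An antiderivative of `exp w / w`. -/
noncomputable def EI (w : ℝ) : ℝ := ∫ s in (1:ℝ)..w, Real.exp s / s

theorem EI_deriv (w : ℝ) (hw : 0 < w) : HasDerivAt EI (Real.exp w / w) w := by
  unfold EI
  have hc : ContinuousOn (fun s : ℝ => Real.exp s / s) (Set.Ioi 0) :=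
    Real.continuous_exp.continuousOn.div continuousOn_id (fun x hx => ne_of_gt hx)
  apply intervalIntegral.integral_hasDerivAt_right
  · apply ContinuousOn.intervalIntegrable
    apply hc.mono
    intro t ht
    rw [Set.mem_uIcc] at ht
    simp only [Set.mem_Ioi]
    rcases ht with h | h <;> linarith [h.1]
  · exact hc.stronglyMeasurableAtFilter isOpen_Ioi w hw
  · exact hc.continuousAt (Ioi_mem_nhds hw)

theorem I_eq (L t0 : ℝ) (hL : 1 < L) (ht : 1 < t0) (htx : t0 ≤ Real.exp L) :
    ∫ t in t0..Real.exp L, FL L t =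
      EI ((L - 1) / 2) - EI ((1 / 2 - 1 / (2 * L)) * Real.log t0)
      - (Real.exp ((L - 1) / 2) - Real.exp ((1 / 2 - 1 / (2 * L)) * Real.log t0)) / ((L - 1) / 2) := by
  have hL0 : 0 < L := by linarith
  set β := 1 / 2 - 1 / (2 * L) with hβ
  have hz : β * L = (L - 1) / 2 := by rw [hβ]; field_simp
  have hβ0 : 0 < β := by
    have : 0 < β * L := by rw [hz]; linarith
    exact pos_of_mul_pos_left this hL0.le
  have hd : ∀ t ∈ Set.uIcc t0 (Real.exp L), HasDerivAt
      (fun t => EI (β * Real.log t) - Real.exp (β * Real.log t) / (β * L)) (FL L t) t := by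
    intro t htt
    rw [Set.uIcc_of_le htx, Set.mem_Icc] at htt
    have ht1 : 1 < t := by linarith
    have ht0 : 0 < t := by linarith
    have hlt := Real.log_pos ht1
    have hltL : Real.log t ≤ L := by
      rw [Real.log_le_iff_le_exp ht0]; exact htt.2
    have d1 : HasDerivAt (fun t => β * Real.log t) (β * t⁻¹) t :=
      (Real.hasDerivAt_log ht0.ne').const_mul β
    have d2 := (EI_deriv (β * Real.log t) (by positivity)).comp t d1
    have d3 := (d1.exp).div_const (β * L)
    have d4 := d2.sub d3
    refine HasDerivAt.congr_deriv d4 (Eq.symm ?_)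
    unfold FL
    have hmax : max (1 / Real.log t - 1 / L) 0 = 1 / Real.log t - 1 / L := by
      apply max_eq_left
      have : 1 / L ≤ 1 / Real.log t := one_div_le_one_div_of_le hlt hltL
      linarith
    have hexp : Real.exp (-((1 / 2 + 1 / (2 * L)) * Real.log t)) = Real.exp (β * Real.log t) * t⁻¹ := by
      rw [← Real.exp_log (inv_pos.mpr ht0), Real.log_inv, ← Real.exp_add]
      congr 1
      rw [hβ]
      field_simp
      ring
    rw [hmax, hexp]
    field_simp
  rw [intervalIntegral.integral_eq_sub_of_hasDerivAt hd (FL_int L _ _ ht (by linarith))]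
  rw [Real.log_exp, hz]
  ring

theorem I_ext (L t0 T : ℝ) (hL : 1 < L) (ht : 1 < t0) (htx : t0 ≤ Real.exp L) (hT : Real.exp L ≤ T) :
    ∫ t in t0..T, FL L t = ∫ t in t0..Real.exp L, FL L t := by
  rw [← intervalIntegral.integral_add_adjacent_intervals
    (FL_int L t0 (Real.exp L) ht (by linarith)) (FL_int L (Real.exp L) T (by linarith) (by linarith))]
  have : ∫ t in Real.exp L..T, FL L t = ∫ t in Real.exp L..T, (0:ℝ) := by
    apply intervalIntegral.integral_congr
    intro t h
    rw [Set.uIcc_of_le hT, Set.mem_Icc] at h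
    apply FL_zero L t (by linarith)
    rw [Real.le_log_iff_exp_le (by linarith)]
    exact h.1
  rw [this]
  simp


theorem diff_le (f g f' g' : ℝ → ℝ) (a b : ℝ) (hab : a ≤ b)
    (hf : ∀ w ∈ Set.Icc a b, HasDerivAt f (f' w) w) (hg : ∀ w ∈ Set.Icc a b, HasDerivAt g (g' w) w)
    (h : ∀ w ∈ Set.Icc a b, f' w ≤ g' w) : f b - f a ≤ g b - g a := by
  have hd : ∀ w ∈ Set.Icc a b, HasDerivAt (fun w => g w - f w) (g' w - f' w) w :=
    fun w hw => (hg w hw).sub (hf w hw)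
  have hm : MonotoneOn (fun w => g w - f w) (Set.Icc a b) := by
    apply monotoneOn_of_hasDerivWithinAt_nonneg (convex_Icc a b)
      (fun w hw => (hd w hw).continuousAt.continuousWithinAt) (f' := fun w => g' w - f' w)
    · intro w hw
      exact (hd w (interior_subset hw)).hasDerivWithinAt
    · intro w hw
      have := h w (interior_subset hw)
      linarith
  have := hm (Set.left_mem_Icc.mpr hab) (Set.right_mem_Icc.mpr hab) hab
  simp only at this
  linarith

theorem exp_rem (W : ℝ) (N : ℕ) : ∀ w ∈ Set.Icc 0 W, Real.exp w ≤
    ∑ k ∈ Finset.range N, w ^ k / (k.factorial : ℝ) + Real.exp W * (w ^ N / (N.factorial : ℝ)) := by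
  have hder : ∀ (n : ℕ) (w : ℝ), HasDerivAt (fun w : ℝ => w ^ (n + 1) / ((n + 1).factorial : ℝ))
      (w ^ n / (n.factorial : ℝ)) w := by
    intro n w
    refine HasDerivAt.congr_deriv ((hasDerivAt_pow (n + 1) w).div_const _) ?_
    have : (n.factorial : ℝ) ≠ 0 := by positivity
    rw [Nat.factorial_succ]
    push_cast
    field_simp
  induction N with
  | zero =>
    intro w hw
    simpa using hw.2
  | succ N ih =>
    intro w hw
    have h := diff_le Real.exp (fun w => ∑ k ∈ Finset.range N, w ^ (k + 1) / ((k + 1).factorial : ℝ)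
        + Real.exp W * (w ^ (N + 1) / ((N + 1).factorial : ℝ))) Real.exp
      (fun w => ∑ k ∈ Finset.range N, w ^ k / (k.factorial : ℝ) + Real.exp W * (w ^ N / (N.factorial : ℝ)))
      0 w hw.1 (fun w _ => Real.hasDerivAt_exp w)
      (fun w _ => (HasDerivAt.fun_sum (fun k _ => hder k w)).add ((hder N w).const_mul _))
      (fun v hv => ih v ⟨hv.1, hv.2.trans hw.2⟩)
    rw [Finset.sum_range_succ']
    simp at h ⊢
    linarith

/-- Majorant antiderivative. -/
noncomputable def G1 (w : ℝ) : ℝ := Real.log w +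
  ∑ k ∈ Finset.range 40, w ^ (k + 1) / (((k + 1 : ℕ) : ℝ) * ((k + 1).factorial : ℝ))
  + 25000 * (w ^ 41 / ((41 : ℕ) * (Nat.factorial 41 : ℝ)))

theorem exp_nine_half_le : Real.exp 9.5 ≤ 25000 := by
  have h1 : Real.exp 9.5 ≤ Real.exp 10 := Real.exp_le_exp.mpr (by norm_num)
  have h2 : Real.exp 10 = Real.exp 1 ^ 10 := by rw [← Real.exp_nat_mul]; norm_num
  have h3 : Real.exp 1 ^ 10 ≤ 2.72 ^ 10 :=
    pow_le_pow_left₀ (Real.exp_pos 1).le (by linarith [Real.exp_one_lt_d9]) 10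
  have h4 : (2.72:ℝ) ^ 10 ≤ 25000 := by norm_num
  linarith

theorem EI_le_G1 (w0 : ℝ) (h0 : 0 < w0) (h1 : w0 ≤ 9.5) : EI 9.5 - EI w0 ≤ G1 9.5 - G1 w0 := by
  have hder : ∀ (n : ℕ) (w : ℝ), HasDerivAt
      (fun w : ℝ => w ^ (n + 1) / (((n + 1 : ℕ) : ℝ) * ((n + 1).factorial : ℝ)))
      (w ^ n / ((n + 1).factorial : ℝ)) w := by
    intro n w
    refine HasDerivAt.congr_deriv ((hasDerivAt_pow (n + 1) w).div_const _) ?_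
    have : ((n + 1).factorial : ℝ) ≠ 0 := by positivity
    simp only [Nat.add_sub_cancel]
    field_simp
  refine diff_le EI G1 (fun w => Real.exp w / w) (fun w => w⁻¹ +
    ∑ k ∈ Finset.range 40, w ^ k / ((k + 1).factorial : ℝ) + 25000 * (w ^ 40 / (Nat.factorial 41 : ℝ)))
    w0 9.5 h1 ?_ ?_ ?_
  · intro w hw
    exact EI_deriv w (by linarith [hw.1])
  · intro w hw
    have : w ≠ 0 := by linarith [hw.1]
    exact ((Real.hasDerivAt_log this).add (HasDerivAt.fun_sum (fun k _ => hder k w))).add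
      ((hder 40 w).const_mul _)
  · intro w hw
    have hw0 : 0 < w := by linarith [hw.1]
    have h := exp_rem 9.5 41 w ⟨hw0.le, hw.2⟩
    rw [Finset.sum_range_succ'] at h
    rw [div_le_iff₀ hw0]
    have hs : ∑ k ∈ Finset.range 40, w ^ (k + 1) / ((k + 1).factorial : ℝ) =
        (∑ k ∈ Finset.range 40, w ^ k / ((k + 1).factorial : ℝ)) * w := by
      rw [Finset.sum_mul]
      apply Finset.sum_congr rfl
      intro k _
      ring
    rw [hs] at h
    have hp : 0 ≤ w ^ 41 / (Nat.factorial 41 : ℝ) := by positivity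
    have h2 := mul_le_mul_of_nonneg_right exp_nine_half_le hp
    have e : (w⁻¹ + ∑ k ∈ Finset.range 40, w ^ k / ((k + 1).factorial : ℝ)
        + 25000 * (w ^ 40 / (Nat.factorial 41 : ℝ))) * w
        = 1 + (∑ k ∈ Finset.range 40, w ^ k / ((k + 1).factorial : ℝ)) * w
          + 25000 * (w ^ 41 / (Nat.factorial 41 : ℝ)) := by
      field_simp
    rw [e]
    simp only [pow_zero, Nat.factorial_zero, Nat.cast_one, div_one] at h
    linarith

theorem G1_nine_half : G1 9.5 ≤ Real.log 9.5 + 1602.2003 := by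
  unfold G1
  have : ∑ k ∈ Finset.range 40, (9.5:ℝ) ^ (k + 1) / (((k + 1 : ℕ) : ℝ) * ((k + 1).factorial : ℝ))
    + 25000 * ((9.5:ℝ) ^ 41 / ((41 : ℕ) * (Nat.factorial 41 : ℝ))) ≤ 1602.2003 := by
    simp only [Finset.sum_range_succ, Finset.sum_range_zero, Nat.factorial]
    norm_num
  linarith

theorem G1_ge (w : ℝ) (hw : 0 < w) : Real.log w + w + w ^ 2 / 4 + w ^ 3 / 18 ≤ G1 w := by
  unfold G1
  have h1 : ∑ k ∈ Finset.range 3, w ^ (k + 1) / (((k + 1 : ℕ) : ℝ) * ((k + 1).factorial : ℝ)) ≤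
      ∑ k ∈ Finset.range 40, w ^ (k + 1) / (((k + 1 : ℕ) : ℝ) * ((k + 1).factorial : ℝ)) := by
    apply Finset.sum_le_sum_of_subset_of_nonneg
    · intro k hk
      simp only [Finset.mem_range] at *
      omega
    · intro k _ _
      positivity
  have h2 : 0 ≤ 25000 * (w ^ 41 / ((41 : ℕ) * (Nat.factorial 41 : ℝ))) := by positivity
  have h3 : ∑ k ∈ Finset.range 3, w ^ (k + 1) / (((k + 1 : ℕ) : ℝ) * ((k + 1).factorial : ℝ)) =
     w + w ^ 2 / 4 + w ^ 3 / 18 := by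
    simp only [Finset.sum_range_succ, Finset.sum_range_zero, Nat.factorial]
    norm_num
  linarith

theorem EI_bound (l q c a : ℝ) (ha : 0 < a) (hal : a ≤ l) (hl : l ≤ 20) (hq : 20 / a ≤ q)
    (hc : Real.log q + 1602.2003 - (0.475 * a + (0.475 * a) ^ 2 / 4 + (0.475 * a) ^ 3 / 18) ≤ c) :
    EI 9.5 - EI (0.475 * l) ≤ c := by
  have hl0 : 0 < l := by linarith
  have h1 := EI_le_G1 (0.475 * l) (by positivity) (by linarith)
  have h2 := G1_ge (0.475 * l) (by positivity)
  have h3 := G1_nine_half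
  have h4 : Real.log 9.5 - Real.log (0.475 * l) ≤ Real.log q := by
    rw [← Real.log_div (by norm_num) (by positivity)]
    apply Real.log_le_log (by positivity)
    refine le_trans ?_ hq
    rw [show (9.5:ℝ) / (0.475 * l) = 20 / l by field_simp; norm_num]
    gcongr
  have h5 : (0.475 * a) ^ 2 ≤ (0.475 * l) ^ 2 := by gcongr
  have h6 : (0.475 * a) ^ 3 ≤ (0.475 * l) ^ 3 := by gcongr
  linarith

theorem c3_bound : EI 9.5 - EI (0.475 * Real.log 3) ≤ 1604.51 := by
  have l2 := Real.log_two_lt_d9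
  have l3 := Real.log_three_lt_d9
  have l3' := Real.log_three_gt_d9
  apply EI_bound _ 18.206 _ 1.0986 (by norm_num) (by linarith) (by linarith) (by norm_num)
  have h : Real.log 18.206 = 2 * Real.log 3 + Real.log 2 + Real.log (18.206 / 18) := by
    rw [show (18.206:ℝ) = 3 ^ 2 * 2 * (18.206 / 18) by norm_num,
      Real.log_mul (by norm_num) (by norm_num), Real.log_mul (by norm_num) (by norm_num), Real.log_pow]
    norm_num
  have h2 := Real.log_le_sub_one_of_pos (show (0:ℝ) < 18.206 / 18 by norm_num)
  rw [h]
  norm_num at *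
  linarith

theorem log45 : Real.log 4.5 = 2 * Real.log 3 - Real.log 2 := by
  rw [show (4.5:ℝ) = 3 ^ 2 / 2 by norm_num, Real.log_div (by norm_num) (by norm_num), Real.log_pow]
  norm_num

theorem c45_bound : EI 9.5 - EI (0.475 * Real.log 4.5) ≤ 1603.93 := by
  have l2 := Real.log_two_lt_d9
  have l2' := Real.log_two_gt_d9
  have l3 := Real.log_three_lt_d9
  have l3' := Real.log_three_gt_d9
  have h45 := log45
  apply EI_bound _ 13.298 _ 1.504 (by norm_num) (by linarith) (by linarith) (by norm_num)
  have h : Real.log 13.298 = 3 * Real.log 3 - Real.log 2 + Real.log (13.298 / 13.5) := by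
    rw [show (13.298:ℝ) = 3 ^ 3 / 2 * (13.298 / 13.5) by norm_num,
      Real.log_mul (by norm_num) (by norm_num), Real.log_div (by norm_num) (by norm_num), Real.log_pow]
    norm_num
  have h2 := Real.log_le_sub_one_of_pos (show (0:ℝ) < 13.298 / 13.5 by norm_num)
  rw [h]
  norm_num at *
  linarith

/-- Asymptotic majorant. -/
noncomputable def gA (w : ℝ) : ℝ := Real.exp w * (1 / w + 1 / w ^ 2 + 2 / w ^ 3 + 10.37 / w ^ 4)

theorem gA_bound (z : ℝ) (hz : 9.5 ≤ z) : EI z - EI 9.5 ≤ gA z - gA 9.5 := by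
  refine diff_le EI gA (fun w => Real.exp w / w)
    (fun w => Real.exp w * (1 / w + 4.37 / w ^ 4 - 41.48 / w ^ 5)) 9.5 z hz ?_ ?_ ?_
  · intro w hw
    exact EI_deriv w (by linarith [hw.1])
  · intro w hw
    have hw0 : w ≠ 0 := by linarith [hw.1]
    have d1 := ((hasDerivAt_const w (1:ℝ)).div (hasDerivAt_id w) hw0)
    have d2 := ((hasDerivAt_const w (1:ℝ)).div (hasDerivAt_pow 2 w) (pow_ne_zero 2 hw0))
    have d3 := ((hasDerivAt_const w (2:ℝ)).div (hasDerivAt_pow 3 w) (pow_ne_zero 3 hw0))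
    have d4 := ((hasDerivAt_const w (10.37:ℝ)).div (hasDerivAt_pow 4 w) (pow_ne_zero 4 hw0))
    refine HasDerivAt.congr_deriv ((Real.hasDerivAt_exp w).mul (((d1.add d2).add d3).add d4)) ?_
    simp only [id]
    field_simp
    push_cast
    ring
  · intro w hw
    have hw0 : 0 < w := by linarith [hw.1]
    rw [div_eq_mul_one_div]
    apply mul_le_mul_of_nonneg_left _ (Real.exp_pos w).le
    have : 41.48 / w ^ 5 ≤ 4.37 / w ^ 4 := by
      rw [div_le_div_iff₀ (by positivity) (by positivity), pow_succ w 4]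
      have h4 : 0 < w ^ 4 := by positivity
      nlinarith [hw.1]
    linarith

theorem gA_nine_half : 1602.48 ≤ gA 9.5 := by
  unfold gA
  have h : 13359.7 ≤ Real.exp 9.5 := by
    apply le_of_sq_le_sq _ (Real.exp_pos _).le
    have h2 : Real.exp 9.5 ^ 2 = Real.exp 1 ^ 19 := by
      rw [← Real.exp_nat_mul, ← Real.exp_nat_mul]; norm_num
    rw [h2]
    refine le_trans ?_ (pow_le_pow_left₀ (by norm_num) Real.exp_one_gt_d9.le 19)
    norm_num
  norm_num at *
  linarith

theorem I_le (L t0 c r : ℝ) (h20 : 20 ≤ L) (ht : 1 < t0) (htx : t0 ≤ Real.exp L)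
    (hc : EI 9.5 - EI (0.475 * Real.log t0) ≤ c) (hr0 : 0 ≤ r) (hr : t0 ≤ r ^ 2) :
    ∫ t in t0..Real.exp L, FL L t ≤ c - 1602.48 + r / 9.5 + Real.exp ((L - 1) / 2) *
      (1 / ((L - 1) / 2) ^ 2 + 2 / ((L - 1) / 2) ^ 3 + 10.37 / ((L - 1) / 2) ^ 4) := by
  rw [I_eq L t0 (by linarith) ht htx]
  have hl := Real.log_pos ht
  have hL0 : 0 < L := by linarith
  have he : 1 / (2 * L) ≤ 1 / 40 := one_div_le_one_div_of_le (by norm_num) (by linarith)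
  have he0 : 0 < 1 / (2 * L) := by positivity
  set β := 1 / 2 - 1 / (2 * L) with hβ
  set z := (L - 1) / 2 with hz
  have hz9 : 9.5 ≤ z := by rw [hz]; norm_num; linarith
  have h1 : 0.475 * Real.log t0 ≤ β * Real.log t0 := by
    apply mul_le_mul_of_nonneg_right _ hl.le
    norm_num; linarith
  have h2 := diff_le (fun _ => 0) EI (fun _ => 0) (fun w => Real.exp w / w) _ _ h1
    (fun w _ => hasDerivAt_const w 0) (fun w hw => EI_deriv w (by
      have : 0 < 0.475 * Real.log t0 := by positivity
      linarith [hw.1])) (by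
      intro w hw
      have : 0 < 0.475 * Real.log t0 := by positivity
      have : 0 < w := by linarith [hw.1]
      positivity)
  have h3 := gA_bound z hz9
  have h4 := gA_nine_half
  have hz0 : 0 < z := by linarith
  have h5 : Real.exp (β * Real.log t0) ≤ r := by
    have : Real.exp (β * Real.log t0) ^ 2 ≤ r ^ 2 := by
      rw [← Real.exp_nat_mul]
      refine le_trans ?_ hr
      rw [← Real.le_log_iff_exp_le (by linarith)]
      push_cast
      nlinarith
    exact le_of_sq_le_sq this hr0
  have h6 : Real.exp (β * Real.log t0) / z ≤ r / 9.5 := by gcongr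
  have h7 : gA z = Real.exp z / z + Real.exp z * (1 / z ^ 2 + 2 / z ^ 3 + 10.37 / z ^ 4) := by
    unfold gA; ring
  rw [sub_div]
  linarith


theorem FL_le_inf (L t : ℝ) (hL0 : 0 < L) (ht : 1 < t) :
    Real.log t * FL L t ≤ Real.exp (-(1 / 2 * Real.log t)) := by
  rw [log_mul_FL L t ht]
  have hl := Real.log_pos ht
  unfold hL
  have h1 : Real.exp (-((1 / 2 + 1 / (2 * L)) * Real.log t)) ≤ Real.exp (-(1 / 2 * Real.log t)) := by
    apply Real.exp_le_exp.mpr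
    have : 0 ≤ 1 / (2 * L) * Real.log t := by positivity
    linarith
  have h2 : max (1 - Real.log t / L) 0 ≤ 1 := by
    apply max_le _ zero_le_one
    have : 0 ≤ Real.log t / L := by positivity
    linarith
  calc _ ≤ Real.exp (-(1 / 2 * Real.log t)) * 1 :=
        mul_le_mul h1 h2 (le_max_right _ _) (Real.exp_pos _).le
    _ = _ := mul_one _

theorem Q_bound (L : ℝ) (h20 : 20 ≤ L) (C : ℕ) (hC : Real.exp L ≤ C) (X : ℝ)
    (hX : X = Real.exp ((L - 1) / 2) *
      (1 / ((L - 1) / 2) ^ 2 + 2 / ((L - 1) / 2) ^ 3 + 10.37 / ((L - 1) / 2) ^ 4)) :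
    Real.log 2 * ∑ k ∈ Finset.range (6 * (C + 1)), FL L ((2 * (k + 1) : ℕ) : ℝ)
      + Real.log 3 * ∑ k ∈ Finset.range (4 * (C + 1)), FL L ((3 * (k + 1) : ℕ) : ℝ)
      + (1 + 0.0325) * Real.log 6 * ∑ k ∈ Finset.range (2 * (C + 1)), FL L ((6 * (k + 1) : ℕ) : ℝ)
      - 2 * 0.0325 * Real.log 12 * ∑ k ∈ Finset.range (C + 1), FL L ((12 * (k + 1) : ℕ) : ℝ)
      ≤ 3.34 + 1.00767 * X := by
  have hL0 : 0 < L := by linarith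
  have hexp : 20 ≤ Real.exp L := by have := Real.add_one_le_exp L; linarith
  have hC0 : (20:ℝ) ≤ C := by linarith
  have l2 := Real.log_two_lt_d9
  have l2' := Real.log_two_gt_d9
  have l3 := Real.log_three_lt_d9
  have l3' := Real.log_three_gt_d9
  have l6 : Real.log 6 = Real.log 2 + Real.log 3 := by
    rw [← Real.log_mul (by norm_num) (by norm_num)]; norm_num
  have l12 : Real.log 12 = 2 * Real.log 2 + Real.log 3 := by
    rw [show (12:ℝ) = 2 ^ 2 * 3 by norm_num, Real.log_mul (by norm_num) (by norm_num), Real.log_pow]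
    norm_num
  -- integrals
  have i3 := I_le L 3 1604.51 1.7321 h20 (by norm_num) (by linarith) c3_bound (by norm_num) (by norm_num)
  have i45 := I_le L 4.5 1603.93 2.1214 h20 (by norm_num) (by norm_num; linarith) c45_bound
    (by norm_num) (by norm_num)
  rw [← hX] at i3 i45
  have hX0 : 0 ≤ X := by
    rw [hX]
    have : 0 < (L - 1) / 2 := by linarith
    positivity
  -- the three sums
  have s2 : ∑ k ∈ Finset.range (6 * (C + 1)), FL L ((2 * (k + 1) : ℕ) : ℝ) ≤
      FL L 2 + 1 / 2 * ∫ t in (3:ℝ)..Real.exp L, FL L t := by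
    have e : 6 * (C + 1) = (6 * C + 5) + 1 := by ring
    rw [e, Finset.sum_range_succ']
    have h := sum_mid L 4 2 hL0 (by norm_num) (by norm_num) (6 * C + 5)
    norm_num at h
    rw [I_ext L 3 _ (by linarith) (by norm_num) (by linarith) (by linarith)] at h
    have e2 : ∑ k ∈ Finset.range (6 * C + 5), FL L ((2 * (k + 1 + 1) : ℕ) : ℝ) =
        ∑ k ∈ Finset.range (6 * C + 5), FL L (4 + 2 * (k : ℝ)) := by
      apply Finset.sum_congr rfl
      intro k _
      congr 1
      push_cast; ring
    rw [e2]
    norm_num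
    linarith
  have s3 : ∑ k ∈ Finset.range (4 * (C + 1)), FL L ((3 * (k + 1) : ℕ) : ℝ) ≤
      FL L 3 + 1 / 3 * ∫ t in (4.5:ℝ)..Real.exp L, FL L t := by
    have e : 4 * (C + 1) = (4 * C + 3) + 1 := by ring
    rw [e, Finset.sum_range_succ']
    have h := sum_mid L 6 3 hL0 (by norm_num) (by norm_num) (4 * C + 3)
    rw [show (6:ℝ) - 3 / 2 = 4.5 by norm_num, I_ext L 4.5 _ (by linarith) (by norm_num)
      (by norm_num; linarith) (by push_cast; norm_num; linarith)] at h
    have e2 : ∑ k ∈ Finset.range (4 * C + 3), FL L ((3 * (k + 1 + 1) : ℕ) : ℝ) =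
        ∑ k ∈ Finset.range (4 * C + 3), FL L (6 + 3 * (k : ℝ)) := by
      apply Finset.sum_congr rfl
      intro k _
      congr 1
      push_cast; ring
    rw [e2]
    simp only [zero_add, mul_one, Nat.cast_ofNat]
    linarith
  have s6 : ∑ k ∈ Finset.range (2 * (C + 1)), FL L ((6 * (k + 1) : ℕ) : ℝ) ≤
      1 / 6 * ∫ t in (3:ℝ)..Real.exp L, FL L t := by
    have h := sum_mid L 6 6 hL0 (by norm_num) (by norm_num) (2 * (C + 1))
    rw [show (6:ℝ) - 6 / 2 = 3 by norm_num, I_ext L 3 _ (by linarith) (by norm_num)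
      (by linarith) (by push_cast; linarith)] at h
    have e2 : ∑ k ∈ Finset.range (2 * (C + 1)), FL L ((6 * (k + 1) : ℕ) : ℝ) =
        ∑ k ∈ Finset.range (2 * (C + 1)), FL L (6 + 6 * (k : ℝ)) := by
      apply Finset.sum_congr rfl
      intro k _
      congr 1
      push_cast; ring
    rw [e2]
    linarith
  have s12 : ∑ k ∈ Finset.range (2 * (C + 1)), FL L ((6 * (k + 1) : ℕ) : ℝ) - FL L 6 ≤
      2 * ∑ k ∈ Finset.range (C + 1), FL L ((12 * (k + 1) : ℕ) : ℝ) := by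
    have h := twelve_six (fun j => if j = 0 then 0 else if j = 1 then FL L 2 else FL L (j : ℝ)) (by
      intro j k hj hk
      have anti := (FL_nac L hL0).anti
      have hA : ∀ a b : ℕ, 2 ≤ a → a ≤ b → FL L (b:ℝ) ≤ FL L (a:ℝ) := by
        intro a b ha hab
        apply anti
        · simp only [Set.mem_Ioi]; norm_cast
        · simp only [Set.mem_Ioi]; norm_cast; omega
        · exact_mod_cast hab
      have hj0 : j ≠ 0 := by omega
      have hk0 : k ≠ 0 := by omega
      simp only [hj0, hk0, if_false]
      by_cases hj1 : j = 1
      · by_cases hk1 : k = 1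
        · simp [hj1, hk1]
        · simp only [hj1, hk1, if_true, if_false]
          exact_mod_cast hA 2 k le_rfl (by omega)
      · have hk1 : k ≠ 1 := by omega
        simp only [hj1, hk1, if_false]
        exact hA j k (by omega) hk) (C + 1)
    have f6 : ∀ k : ℕ, 6 * (k + 1) ≠ 0 ∧ 6 * (k + 1) ≠ 1 := fun k => by omega
    have f12 : ∀ k : ℕ, 12 * (k + 1) ≠ 0 ∧ 12 * (k + 1) ≠ 1 := fun k => by omega
    have f18 : 12 * (C + 1) + 6 ≠ 0 ∧ 12 * (C + 1) + 6 ≠ 1 := by omega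
    simp only [(f6 _).1, (f6 _).2, (f12 _).1, (f12 _).2, f18.1, f18.2, if_false] at h
    have h0 := FL_nonneg L ((12 * (C + 1) + 6 : ℕ) : ℝ)
    norm_num at h h0 ⊢
    linarith
  have t2 := (FL_le_inf L 2 hL0 (by norm_num)).trans
    (exp_half_log_le 2 0.7072 (by norm_num) (by norm_num) (by norm_num))
  have t3 := (FL_le_inf L 3 hL0 (by norm_num)).trans
    (exp_half_log_le 3 0.5774 (by norm_num) (by norm_num) (by norm_num))
  have t6 := (FL_le_inf L 6 hL0 (by norm_num)).trans
    (exp_half_log_le 6 0.4083 (by norm_num) (by norm_num) (by norm_num))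
  have f6 := FL_nonneg L 6
  generalize (∫ t in (3:ℝ)..Real.exp L, FL L t) = I3 at *
  generalize (∫ t in (4.5:ℝ)..Real.exp L, FL L t) = I45 at *
  generalize ∑ k ∈ Finset.range (6 * (C + 1)), FL L ((2 * (k + 1) : ℕ) : ℝ) = S2 at *
  generalize ∑ k ∈ Finset.range (4 * (C + 1)), FL L ((3 * (k + 1) : ℕ) : ℝ) = S3 at *
  generalize ∑ k ∈ Finset.range (2 * (C + 1)), FL L ((6 * (k + 1) : ℕ) : ℝ) = S6 at *
  generalize ∑ k ∈ Finset.range (C + 1), FL L ((12 * (k + 1) : ℕ) : ℝ) = S12 at *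
  have i3' : I3 ≤ 2.2124 + X := by norm_num at i3 ⊢; linarith
  have i45' : I45 ≤ 1.6734 + X := by norm_num at i45 ⊢; linarith
  have u2 : Real.log 2 * S2 ≤ 0.7072 + 0.346574 * (2.2124 + X) := by
    have a1 := mul_le_mul_of_nonneg_left (s2.trans (add_le_add_right (mul_le_mul_of_nonneg_left i3' (by norm_num)) _)) (show 0 ≤ Real.log 2 by linarith)
    have a2 := mul_le_mul_of_nonneg_right (show Real.log 2 / 2 ≤ 0.346574 by linarith) (show 0 ≤ 2.2124 + X by linarith)
    linarith
  have u3 : Real.log 3 * S3 ≤ 0.5774 + 0.366205 * (1.6734 + X) := by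
    have a1 := mul_le_mul_of_nonneg_left (s3.trans (add_le_add_right (mul_le_mul_of_nonneg_left i45' (by norm_num)) _)) (show 0 ≤ Real.log 3 by linarith)
    have a2 := mul_le_mul_of_nonneg_right (show Real.log 3 / 3 ≤ 0.366205 by linarith) (show 0 ≤ 1.6734 + X by linarith)
    linarith
  have u6 : (1 + 0.0325) * Real.log 6 * S6 - 2 * 0.0325 * Real.log 12 * S12 ≤
      0.019 + 0.29489 * (2.2124 + X) := by
    have a0 := mul_le_mul_of_nonneg_left s12 (show 0 ≤ 0.0325 * Real.log 12 by rw [l12]; norm_num; linarith)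
    have a1 := mul_le_mul_of_nonneg_left (s6.trans (mul_le_mul_of_nonneg_left i3' (by norm_num)))
      (show 0 ≤ (1 + 0.0325) * Real.log 6 - 0.0325 * Real.log 12 by rw [l6, l12]; norm_num; linarith)
    have a2 := mul_le_mul_of_nonneg_right
      (show ((1 + 0.0325) * Real.log 6 - 0.0325 * Real.log 12) / 6 ≤ 0.29489 by rw [l6, l12]; norm_num; linarith)
      (show 0 ≤ 2.2124 + X by linarith)
    have a3 : 0.0325 * Real.log 12 * FL L 6 ≤ 0.019 := by
      have : Real.log 12 ≤ 1.39 * Real.log 6 := by rw [l6, l12]; norm_num; linarith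
      have := mul_le_mul_of_nonneg_right this f6
      linarith
    linarith
  linarith

theorem final_num (L : ℝ) (h20 : 20 ≤ L) :
    4.387 + 1.00767 * (Real.exp ((L - 1) / 2) *
      (1 / ((L - 1) / 2) ^ 2 + 2 / ((L - 1) / 2) ^ 3 + 10.37 / ((L - 1) / 2) ^ 4))
      ≤ 3.675 * Real.exp (L / 2) / L ^ 2 := by
  have hL0 : 0 < L := by linarith
  rw [le_div_iff₀ (by positivity)]
  have hz0 : 0 < (L - 1) / 2 := by linarith
  have hexp : Real.exp ((L - 1) / 2) = Real.exp (L / 2) * Real.exp (-(1 / 2)) := by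
    rw [← Real.exp_add]; congr 1; ring
  have hhalf : Real.exp (-(1 / 2)) ≤ 0.60654 := by
    have h1 : Real.exp (-(1 / 2)) ^ 2 = (Real.exp 1)⁻¹ := by
      rw [← Real.exp_nat_mul, ← Real.exp_neg]; norm_num
    apply le_of_sq_le_sq _ (by norm_num)
    rw [h1, inv_le_comm₀ (Real.exp_pos 1) (by norm_num)]
    have := Real.exp_one_gt_d9
    norm_num at *
    linarith
  -- the constant term
  have hK : L ^ 2 ≤ 0.01817 * Real.exp (L / 2) := by
    have h1 := Real.add_one_le_exp ((L - 20) / 4)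
    have h2 : L / 20 ≤ Real.exp ((L - 20) / 4) := by linarith
    have h3 : (L / 20) ^ 2 ≤ Real.exp ((L - 20) / 4) ^ 2 := by gcongr
    have h4 : Real.exp (L / 2) = Real.exp ((L - 20) / 4) ^ 2 * Real.exp 1 ^ 10 := by
      rw [← Real.exp_nat_mul, ← Real.exp_nat_mul, ← Real.exp_add]; congr 1; push_cast; ring
    have h5 : 22026 ≤ Real.exp 1 ^ 10 := by
      refine le_trans ?_ (pow_le_pow_left₀ (by norm_num) Real.exp_one_gt_d9.le 10)
      norm_num
    rw [h4]
    have h6 := mul_le_mul h3 h5 (by norm_num) (by positivity)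
    norm_num at h6 ⊢
    nlinarith
  set z := (L - 1) / 2 with hz
  have hLz : L = 2 * z + 1 := by rw [hz]; ring
  have hz9 : 19 / 2 ≤ z := by rw [hz]; linarith
  have hrat : (1 / z ^ 2 + 2 / z ^ 3 + 10.37 / z ^ 4) * L ^ 2 ≤ 5.8748 := by
    set τ := 1 / z with hτ
    have hτ1 : τ ≤ 2 / 19 := by
      rw [hτ, div_le_div_iff₀ hz0 (by norm_num)]; linarith
    have hτ0 : 0 < τ := by positivity
    have e : (1 / z ^ 2 + 2 / z ^ 3 + 10.37 / z ^ 4) * L ^ 2 = (2 + τ) ^ 2 * (1 + 2 * τ + 10.37 * τ ^ 2) := by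
      rw [hLz, hτ]; field_simp
    rw [e]
    calc (2 + τ) ^ 2 * (1 + 2 * τ + 10.37 * τ ^ 2)
        ≤ (2 + 2 / 19) ^ 2 * (1 + 2 * (2 / 19) + 10.37 * (2 / 19) ^ 2) := by gcongr
      _ ≤ 5.8748 := by norm_num
  rw [hexp]
  have hE := Real.exp_pos (L / 2)
  have hh0 := Real.exp_pos (-(1 / 2) : ℝ)
  have h7 : Real.exp (-(1 / 2)) * ((1 / z ^ 2 + 2 / z ^ 3 + 10.37 / z ^ 4) * L ^ 2) ≤ 0.60654 * 5.8748 := by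
    apply mul_le_mul hhalf hrat (by positivity) (by norm_num)
  have h8 := mul_le_mul_of_nonneg_left h7 hE.le
  norm_num at h8 hK ⊢
  nlinarith

/-- Assume the Riemann Hypothesis. Then for every real `x` with
`log x ≥ 20`,
`∑_{2 ≤ n ≤ x} Λ(n)/(n^{1/2 + 1/(2 log x)} log n)·(log(x/n)/log x) ≤ 3.675·x^{1/2}/(log x)²`. -/
theorem vonMangoldt_sum_upper_bound
    (hRH : ∀ s : ℂ, riemannZeta s = 0 → 0 < s.re → s.re < 1 → s.re = 1 / 2)
    (x : ℝ) (hx : 20 ≤ Real.log x) :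
    ∑ n ∈ Finset.Icc 2 ⌊x⌋₊,
        ArithmeticFunction.vonMangoldt n /
          ((n : ℝ) ^ ((1 : ℝ) / 2 + 1 / (2 * Real.log x)) * Real.log n) *
          (Real.log (x / n) / Real.log x) ≤
      3.675 * x ^ ((1 : ℝ) / 2) / (Real.log x) ^ 2 := by
  rcases le_or_gt x 0 with hx0 | hx0
  · rw [Nat.floor_of_nonpos hx0]
    have hxn : x < 0 := by
      rcases eq_or_lt_of_le hx0 with h | h
      · rw [h, Real.log_zero] at hx; linarith
      · exact h
    rw [Real.rpow_def_of_neg hxn, show (1:ℝ) / 2 * Real.pi = Real.pi / 2 by ring, Real.cos_pi_div_two]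
    simp
  set L := Real.log x with hLdef
  have hL0 : 0 < L := by linarith
  have hxe : Real.exp L = x := Real.exp_log hx0
  have hroot : x ^ ((1:ℝ) / 2) = Real.exp (L / 2) := by
    rw [Real.rpow_def_of_pos hx0]; congr 1; ring
  rw [hroot]
  have hterm : ∀ n ∈ Finset.Icc 2 ⌊x⌋₊,
      ArithmeticFunction.vonMangoldt n / ((n : ℝ) ^ ((1 : ℝ) / 2 + 1 / (2 * L)) * Real.log n) *
          (Real.log (x / n) / L) = ArithmeticFunction.vonMangoldt n * FL L n := by
    intro n hn
    rw [Finset.mem_Icc] at hn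
    have hn2 : (2:ℝ) ≤ n := by exact_mod_cast hn.1
    have hn0 : (0:ℝ) < n := by linarith
    have hnx : (n:ℝ) ≤ x := (Nat.le_floor_iff hx0.le).mp hn.2
    have hl : 0 < Real.log n := Real.log_pos (by linarith)
    have hlL : Real.log n ≤ L := Real.log_le_log hn0 hnx
    unfold FL
    rw [max_eq_left (by have : 1 / L ≤ 1 / Real.log n := one_div_le_one_div_of_le hl hlL
                        linarith)]
    rw [Real.log_div hx0.ne' hn0.ne', Real.rpow_def_of_pos hn0, Real.exp_neg,
      mul_comm (Real.log (n:ℝ)) ((1 : ℝ) / 2 + 1 / (2 * L)), ← hLdef]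
    have hE := Real.exp_pos (((1 : ℝ) / 2 + 1 / (2 * L)) * Real.log n)
    generalize Real.exp (((1 : ℝ) / 2 + 1 / (2 * L)) * Real.log n) = E at *
    field_simp
  rw [Finset.sum_congr rfl hterm]
  have hz : ∀ k : ℕ, ⌊x⌋₊ < k → FL L (k : ℝ) = 0 := by
    intro k hk
    apply FL_zero L _ hL0
    have : x < k := (Nat.floor_lt hx0.le).mp hk
    exact Real.log_le_log hx0 this.le
  have hC : Real.exp L ≤ ((⌊x⌋₊ + 1 : ℕ) : ℝ) := by
    rw [hxe]; push_cast; exact (Nat.lt_floor_add_one x).le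
  have h1 := main_split L hL0 ⌊x⌋₊ (⌊x⌋₊ + 1) hz (by omega)
  have h2 := H_bound L hx (⌊x⌋₊ + 1)
  have h3 := Q_bound L hx (⌊x⌋₊ + 1) hC _ rfl
  have h4 := final_num L hx
  linarith
end

section
/- For every real x with log x ≥ 20, one has ∫₁^{x/2} (log y)/( y^{3/2 - 1/(2 log x)} · (1 - (log y)/(log x)) ) dy ≤ 5.961. -/
/-- An antiderivative of `exp r / r` on the positive reals. -/
noncomputable def EE (z : ℝ) : ℝ := ∫ r in (1 : ℝ)..z, Real.exp r / r

lemma EE_hasDerivAt {z : ℝ} (hz : 0 < z) : HasDerivAt EE (Real.exp z / z) z := by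
  have hc : ContinuousOn (fun r : ℝ => Real.exp r / r) (Set.Ioi 0) := by
    apply ContinuousOn.div (by fun_prop) (by fun_prop)
    intro r hr; exact (ne_of_gt hr)
  unfold EE
  apply intervalIntegral.integral_hasDerivAt_right
  · apply ContinuousOn.intervalIntegrable
    apply hc.mono
    intro r hr
    have := hr.1
    exact lt_of_lt_of_le (lt_min one_pos hz) this
  · exact hc.stronglyMeasurableAtFilter isOpen_Ioi z hz
  · exact hc.continuousAt (Ioi_mem_nhds hz)

lemma exp_le_sum {r : ℝ} (h0 : 0 ≤ r) (h1 : r ≤ 19 / 2) :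
    Real.exp r ≤ ∑ m ∈ Finset.range 30, r ^ m / (m.factorial : ℝ)
      + r ^ 30 / (Nat.factorial 30 : ℝ) * 2 := by
  have h := Complex.exp_bound' (x := (r : ℂ)) (n := 30) (by
    rw [Complex.norm_real, Real.norm_of_nonneg h0]; push_cast; linarith)
  rw [Complex.norm_real, Real.norm_of_nonneg h0] at h
  have e : Complex.exp (r : ℂ) - ∑ m ∈ Finset.range 30, (r : ℂ) ^ m / (m.factorial : ℂ)
      = ((Real.exp r - ∑ m ∈ Finset.range 30, r ^ m / (m.factorial : ℝ) : ℝ) : ℂ) := by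
    push_cast; rfl
  rw [e, Complex.norm_real] at h
  have := (abs_le.1 (by simpa using h)).2
  simp only [Nat.factorial] at this ⊢
  norm_num at this ⊢
  linarith

/-- Comparison antiderivative. -/
noncomputable def QQ (z : ℝ) : ℝ :=
  Real.log z + ∑ m ∈ Finset.range 29, z ^ (m + 1) / ((m + 1 : ℝ) * ((m + 1).factorial : ℝ))
    + z ^ 30 / (30 * (Nat.factorial 30 : ℝ)) * 2

lemma QQ_hasDerivAt {z : ℝ} (hz : 0 < z) : HasDerivAt QQ
    ((∑ m ∈ Finset.range 30, z ^ m / (m.factorial : ℝ)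
      + z ^ 30 / (Nat.factorial 30 : ℝ) * 2) / z) z := by
  have h1 := Real.hasDerivAt_log hz.ne'
  have h2 : HasDerivAt (fun z : ℝ => ∑ m ∈ Finset.range 29,
      z ^ (m + 1) / ((m + 1 : ℝ) * ((m + 1).factorial : ℝ)))
      (∑ m ∈ Finset.range 29, z ^ m / ((m + 1).factorial : ℝ)) z := by
    apply HasDerivAt.fun_sum
    intro m _
    have := (hasDerivAt_pow (m + 1) z).div_const ((m + 1 : ℝ) * ((m + 1).factorial : ℝ))
    refine this.congr_deriv ?_
    have : ((m : ℝ) + 1) ≠ 0 := by positivity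
    have : (((m + 1).factorial : ℕ) : ℝ) ≠ 0 := by positivity
    push_cast
    field_simp
  have h3 := ((hasDerivAt_pow 30 z).div_const (30 * (Nat.factorial 30 : ℝ))).mul_const 2
  have h := (h1.add h2).add h3
  refine h.congr_deriv ?_
  rw [Finset.sum_range_succ' (fun m => z ^ m / (m.factorial : ℝ)) 29]
  have : ∑ k ∈ Finset.range 29, z ^ (k + 1) / (((k + 1).factorial : ℕ) : ℝ)
      = z * ∑ m ∈ Finset.range 29, z ^ m / ((m + 1).factorial : ℝ) := by
    rw [Finset.mul_sum]; apply Finset.sum_congr rfl; intros; ring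
  rw [this]
  have hf : ((Nat.factorial 30 : ℕ) : ℝ) ≠ 0 := by positivity
  generalize ((Nat.factorial 30 : ℕ) : ℝ) = F at *
  generalize ∑ m ∈ Finset.range 29, z ^ m / ((m + 1).factorial : ℝ) = S
  simp
  field_simp
  ring

lemma EE_sub_le {c : ℝ} (hc : 0 < c) (hc1 : c ≤ 19 / 2) :
    EE (19 / 2) - EE c ≤ QQ (19 / 2) - QQ c := by
  have hd : ∀ z ∈ Set.Icc c (19 / 2), HasDerivAt (fun z => QQ z - EE z)
      ((∑ m ∈ Finset.range 30, z ^ m / (m.factorial : ℝ)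
      + z ^ 30 / (Nat.factorial 30 : ℝ) * 2) / z - Real.exp z / z) z := fun z hz =>
    (QQ_hasDerivAt (hc.trans_le hz.1)).sub (EE_hasDerivAt (hc.trans_le hz.1))
  have hm : MonotoneOn (fun z => QQ z - EE z) (Set.Icc c (19 / 2)) := by
    apply monotoneOn_of_deriv_nonneg (convex_Icc _ _)
    · exact fun z hz => (hd z hz).continuousAt.continuousWithinAt
    · exact fun z hz => (hd z (interior_subset hz)).differentiableAt.differentiableWithinAt
    · intro z hz
      have hz := interior_subset hz
      rw [(hd z hz).deriv, ← sub_div]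
      have h0 := hc.trans_le hz.1
      exact div_nonneg (sub_nonneg.2 (exp_le_sum h0.le hz.2)) h0.le
  have := hm (Set.left_mem_Icc.2 hc1) (Set.right_mem_Icc.2 hc1) hc1
  simp only at this
  linarith

/-- The auxiliary function, decreasing for `L ≥ 20`. -/
noncomputable def PP (L : ℝ) : ℝ :=
  EE ((L - 1) / 2) - EE ((1 / 2 - 1 / (2 * L)) * Real.log 2)
    - 5.961 * Real.exp ((L - 1) / 2) / L ^ 2
    - 2 * (Real.exp ((L - 1) / 2) - Real.exp ((1 / 2 - 1 / (2 * L)) * Real.log 2)) / (L - 1)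

lemma PP_hasDerivAt {L : ℝ} (hL : 20 ≤ L) : HasDerivAt PP
    (Real.exp ((L - 1) / 2) * (2 / (L - 1) ^ 2 - 5.961 / (2 * L ^ 2) + 2 * 5.961 / L ^ 3)
     + Real.exp ((1 / 2 - 1 / (2 * L)) * Real.log 2) *
      (-1 / (L * (L - 1)) + Real.log 2 / (L ^ 2 * (L - 1)) - 2 / (L - 1) ^ 2)) L := by
  have hL0 : L ≠ 0 := by linarith
  have hL1 : L - 1 ≠ 0 := by linarith
  have hl2 : 0 < Real.log 2 := Real.log_pos (by norm_num)
  have ha : 0 < 1 / 2 - 1 / (2 * L) := by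
    have : 1 / 2 - 1 / (2 * L) = (L - 1) / (2 * L) := by field_simp
    rw [this]; apply div_pos <;> linarith
  have d1 : HasDerivAt (fun L : ℝ => (L - 1) / 2) (1 / 2) L :=
    ((hasDerivAt_id L).sub_const 1).div_const 2
  have d2 : HasDerivAt (fun L : ℝ => (1 / 2 - 1 / (2 * L)) * Real.log 2)
      (1 / (2 * L ^ 2) * Real.log 2) L := by
    have h : HasDerivAt (fun L : ℝ => 2 * L) (2 * 1) L := (hasDerivAt_id L).const_mul 2
    have := ((((hasDerivAt_const L (1 : ℝ)).div h (by positivity)).const_sub (1 / 2)).mul_const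
      (Real.log 2))
    refine this.congr_deriv ?_
    field_simp
    ring
  have e1 := (EE_hasDerivAt (z := (L - 1) / 2) (by linarith)).comp L d1
  have e2 := (EE_hasDerivAt (z := (1 / 2 - 1 / (2 * L)) * Real.log 2) (by positivity)).comp L d2
  have e3 := (d1.exp.const_mul 5.961).div (hasDerivAt_pow 2 L) (by positivity)
  have e4 := ((d1.exp.sub d2.exp).const_mul 2).div ((hasDerivAt_id L).sub_const 1) hL1
  have h := ((e1.sub e2).sub e3).sub e4
  refine h.congr_deriv ?_
  simp only [Pi.sub_apply, id]
  have hA : 1 / 2 - 1 / (2 * L) = (L - 1) / (2 * L) := by field_simp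
  generalize Real.exp ((L - 1) / 2) = A
  generalize Real.exp ((1 / 2 - 1 / (2 * L)) * Real.log 2) = B
  rw [hA]
  generalize Real.log 2 = l at *
  field_simp
  ring

lemma PP_20 : PP 20 ≤ 0 := by
  have l1 := Real.log_two_gt_d9
  have l2 := Real.log_two_lt_d9
  have hc0 : 0 < (19 / 40 : ℝ) * Real.log 2 := by linarith
  have h1 := EE_sub_le hc0 (by linarith)
  have hs : Real.exp (19 / 40 * Real.log 2) ≤ 1.4143 := by
    have : Real.exp (19 / 40 * Real.log 2) ≤ Real.exp (Real.log 1.4143) := by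
      apply Real.exp_le_exp.2
      have : Real.log 2 ≤ 2 * Real.log 1.4143 := by
        rw [← Real.log_rpow (by norm_num)]
        apply Real.log_le_log (by norm_num); norm_num
      linarith
    rwa [Real.exp_log (by norm_num)] at this
  have he : (13359.7 : ℝ) ≤ Real.exp (19 / 2) := by
    refine le_trans ?_ (Real.sum_le_exp_of_nonneg (by norm_num) 40)
    norm_num [Finset.sum_range_succ, Nat.factorial]
  have hq1 : QQ (19 / 2) ≤ Real.log (19 / 2) + 1602.201 := by
    unfold QQ
    norm_num [Finset.sum_range_succ, Nat.factorial]
    rw [add_assoc]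
    apply add_le_add_right
    norm_num
  have hq2 : Real.log (19 / 40 * Real.log 2) + 0.355 ≤ QQ (19 / 40 * Real.log 2) := by
    unfold QQ
    have hc1 : 0.3292 ≤ (19 / 40 : ℝ) * Real.log 2 := by linarith
    generalize (19 / 40 : ℝ) * Real.log 2 = c at *
    have : c + c ^ 2 / 4 ≤ ∑ m ∈ Finset.range 29,
        c ^ (m + 1) / ((m + 1 : ℝ) * ((m + 1).factorial : ℝ)) := by
      have := Finset.sum_le_sum_of_subset_of_nonneg (s := Finset.range 2) (t := Finset.range 29)
        (f := fun m : ℕ => c ^ (m + 1) / ((m + 1 : ℝ) * ((m + 1).factorial : ℝ)))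
        (by intro a; simp; omega) (by intros; positivity)
      refine le_trans (le_of_eq ?_) this
      norm_num [Finset.sum_range_succ, Nat.factorial]
    have h3 : 0 ≤ c ^ 30 / (30 * (Nat.factorial 30 : ℝ)) * 2 := by positivity
    nlinarith
  have hlog : Real.log (19 / 2) - Real.log (19 / 40 * Real.log 2) ≤ 3.365 := by
    rw [← Real.log_div (by norm_num) hc0.ne', Real.log_le_iff_le_exp (by positivity)]
    have : (28.9 : ℝ) ≤ Real.exp 3.365 := by
      refine le_trans ?_ (Real.sum_le_exp_of_nonneg (by norm_num) 20)
      norm_num [Finset.sum_range_succ, Nat.factorial]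
    refine le_trans ?_ this
    rw [div_le_iff₀ hc0]
    linarith
  unfold PP
  norm_num at *
  linarith

lemma PP_nonpos {L : ℝ} (hL : 20 ≤ L) : PP L ≤ 0 := by
  have hm : AntitoneOn PP (Set.Ici 20) := by
    apply antitoneOn_of_deriv_nonpos (convex_Ici _)
    · exact fun z hz => (PP_hasDerivAt hz).continuousAt.continuousWithinAt
    · exact fun z hz =>
        (PP_hasDerivAt (interior_subset hz)).differentiableAt.differentiableWithinAt
    · intro z hz
      have hz : 20 ≤ z := interior_subset hz
      rw [(PP_hasDerivAt hz).deriv]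
      have l2 := Real.log_two_lt_d9
      have hz0 : 0 < z := by linarith
      have hz1 : 0 < z - 1 := by linarith
      have p1 : 2 / (z - 1) ^ 2 - 5.961 / (2 * z ^ 2) + 2 * 5.961 / z ^ 3 ≤ 0 := by
        have : 2 / (z - 1) ^ 2 ≤ 2 * (20 / 19) ^ 2 / z ^ 2 := by
          rw [div_le_div_iff₀ (by positivity) (by positivity)]
          nlinarith
        have h2 : 2 * 5.961 / z ^ 3 ≤ 2 * 5.961 / 20 / z ^ 2 := by
          rw [div_div, div_le_div_iff₀ (by positivity) (by positivity)]
          have : 0 < z ^ 2 := by positivity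
          nlinarith
        have h3 : 2 * (20 / 19) ^ 2 / z ^ 2 - 5.961 / (2 * z ^ 2) + 2 * 5.961 / 20 / z ^ 2
          = (2 * (20 / 19) ^ 2 - 5.961 / 2 + 2 * 5.961 / 20) / z ^ 2 := by
          field_simp
        have h4 : (2 * (20 / 19) ^ 2 - 5.961 / 2 + 2 * 5.961 / 20) / z ^ 2 ≤ 0 :=
          div_nonpos_of_nonpos_of_nonneg (by norm_num) (by positivity)
        linarith
      have p2 : -1 / (z * (z - 1)) + Real.log 2 / (z ^ 2 * (z - 1)) - 2 / (z - 1) ^ 2 ≤ 0 := by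
        have : -1 / (z * (z - 1)) + Real.log 2 / (z ^ 2 * (z - 1))
          = (Real.log 2 - z) / (z ^ 2 * (z - 1)) := by field_simp; ring
        rw [this]
        have : (Real.log 2 - z) / (z ^ 2 * (z - 1)) ≤ 0 :=
          div_nonpos_of_nonpos_of_nonneg (by linarith) (by positivity)
        have : 0 ≤ 2 / (z - 1) ^ 2 := by positivity
        linarith
      have := mul_nonpos_of_nonneg_of_nonpos (Real.exp_pos ((z - 1) / 2)).le p1
      have := mul_nonpos_of_nonneg_of_nonpos
        (Real.exp_pos ((1 / 2 - 1 / (2 * z)) * Real.log 2)).le p2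
      linarith
  exact (hm (Set.mem_Ici.2 le_rfl) hL hL).trans PP_20

lemma neg_case (x : ℝ) (hx0 : x < 0) (hx : 20 ≤ Real.log x) :
    ¬ IntervalIntegrable (fun y => Real.log y /
          (y ^ ((3 : ℝ) / 2 - 1 / (2 * Real.log x)) * (1 - Real.log y / Real.log x)))
      MeasureTheory.volume 1 (x / 2) := by
  intro h
  set L := Real.log x with hL
  have hL0 : 0 < L := by linarith
  have hx1 : x / 2 < 0 := by linarith
  have hd0 : 0 < Real.exp (-1) := Real.exp_pos _
  have hd1 : Real.exp (-1) < 1 := by rw [Real.exp_lt_one_iff]; norm_num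
  have h' := h.mono_set (c := 0) (d := Real.exp (-1)) (by
    rw [Set.uIcc_of_le hd0.le, Set.uIcc_of_ge (by linarith)]
    exact Set.Icc_subset_Icc hx1.le hd1.le)
  have hinv : IntervalIntegrable (fun y : ℝ => y⁻¹) MeasureTheory.volume 0 (Real.exp (-1)) := by
    refine (h'.const_mul 2).mono_fun (by fun_prop) ?_
    rw [Set.uIoc_of_le hd0.le]
    refine (MeasureTheory.ae_restrict_iff' measurableSet_Ioc).2 (Filter.Eventually.of_forall ?_)
    intro y hy
    have hy0 : 0 < y := hy.1
    have hlog : Real.log y ≤ -1 := (Real.log_le_iff_le_exp hy0).2 hy.2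
    have hD : 0 < 1 - Real.log y / L := by
      have : Real.log y / L ≤ 0 := div_nonpos_of_nonpos_of_nonneg (by linarith) hL0.le
      linarith
    have hyp : 0 < y ^ ((3 : ℝ) / 2 - 1 / (2 * L)) := Real.rpow_pos_of_pos hy0 _
    have hyl : y ^ ((3 : ℝ) / 2 - 1 / (2 * L)) ≤ y := by
      conv_rhs => rw [← Real.rpow_one y]
      apply Real.rpow_le_rpow_of_exponent_ge hy0 (hy.2.trans hd1.le)
      have : 1 / (2 * L) ≤ 1 / 2 := by
        apply one_div_le_one_div_of_le <;> linarith
      linarith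
    beta_reduce
    rw [Real.norm_of_nonneg (inv_nonneg.2 hy0.le), norm_mul, norm_div, Real.norm_of_nonpos (by linarith : Real.log y ≤ 0),
      Real.norm_of_nonneg (by positivity : 0 ≤ y ^ ((3 : ℝ) / 2 - 1 / (2 * L)) * (1 - Real.log y / L))]
    rw [Real.norm_of_nonneg (by norm_num : (0:ℝ) ≤ 2), ← mul_div_assoc, inv_eq_one_div,
      div_le_div_iff₀ hy0 (by positivity), one_mul]
    have k1 : 1 - Real.log y / L ≤ 2 * -Real.log y := by
      have : -Real.log y / L ≤ -Real.log y := div_le_self (by linarith) (by linarith)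
      rw [neg_div] at this
      linarith
    calc _ ≤ y * (2 * -Real.log y) := mul_le_mul hyl k1 hD.le hy0.le
      _ = _ := by ring
  have := intervalIntegrable_inv_iff.1 hinv
  rcases this with h | h
  · exact absurd h hd0.ne
  · exact h Set.left_mem_uIcc

lemma pos_case (x : ℝ) (hx0 : 0 < x) (hx : 20 ≤ Real.log x) :
    ∫ y in (1 : ℝ)..(x / 2),
        Real.log y /
          (y ^ ((3 : ℝ) / 2 - 1 / (2 * Real.log x)) * (1 - Real.log y / Real.log x)) ≤
      5.961 := by
  have hlx : Real.log (x / 2) = Real.log x - Real.log 2 := Real.log_div hx0.ne' (by norm_num)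
  have l1 := Real.log_two_gt_d9
  have l2 := Real.log_two_lt_d9
  have hx2 : 1 ≤ x / 2 := by
    by_contra hcon
    have := Real.log_nonpos (by linarith) (le_of_not_ge hcon)
    linarith
  set L := Real.log x with hL
  have hL0 : 0 < L := by linarith
  have hle : ∀ y ∈ Set.uIcc 1 (x / 2), 0 < y ∧ Real.log y < L := by
    intro y hy
    rw [Set.uIcc_of_le hx2] at hy
    have hy0 : 0 < y := by linarith [hy.1]
    have := Real.log_le_log hy0 hy.2
    exact ⟨hy0, by linarith⟩
  obtain ⟨a, ha⟩ : ∃ a, a = 1 / 2 - 1 / (2 * L) := ⟨_, rfl⟩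
  have ha2 : a * L = (L - 1) / 2 := by rw [ha]; field_simp
  have ha0 : 0 < a := by
    have : 0 < a * L := by rw [ha2]; linarith
    exact pos_of_mul_pos_left this hL0.le
  have hs : (3 : ℝ) / 2 - 1 / (2 * L) = 1 + a := by rw [ha]; ring
  rw [hs]
  have hint : ∫ y in (1 : ℝ)..(x / 2), Real.log y / (y ^ (1 + a) * (1 - Real.log y / L))
     = (fun y => -(L ^ 2 * Real.exp (-(a * L)) * EE (a * (L - Real.log y)))
        + L / a * Real.exp (-(a * Real.log y))) (x / 2)
      - (fun y => -(L ^ 2 * Real.exp (-(a * L)) * EE (a * (L - Real.log y)))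
        + L / a * Real.exp (-(a * Real.log y))) 1 := by
    refine intervalIntegral.integral_eq_sub_of_hasDerivAt
      (f := fun y => -(L ^ 2 * Real.exp (-(a * L)) * EE (a * (L - Real.log y)))
        + L / a * Real.exp (-(a * Real.log y)))
      (f' := fun y => Real.log y / (y ^ (1 + a) * (1 - Real.log y / L))) ?_ ?_
    · intro y hy
      obtain ⟨hy0, hyL⟩ := hle y hy
      have hLy : 0 < L - Real.log y := by linarith
      have dl := Real.hasDerivAt_log hy0.ne'
      have d1 := (dl.const_sub L).const_mul a
      have d2 := (EE_hasDerivAt (z := a * (L - Real.log y)) (by positivity)).comp y d1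
      have d3 := (d2.const_mul (L ^ 2 * Real.exp (-(a * L)))).neg
      have d4 := ((dl.const_mul a).neg.exp).const_mul (L / a)
      refine (d3.add d4).congr_deriv ?_
      have hp : y ^ (1 + a) = y * Real.exp (a * Real.log y) := by
        rw [Real.rpow_add hy0, Real.rpow_one, Real.rpow_def_of_pos hy0, mul_comm a]
      have hE : Real.exp (a * (L - Real.log y))
          = Real.exp (a * L) / Real.exp (a * Real.log y) := by
        rw [← Real.exp_sub]; ring_nf
      simp only [Pi.neg_apply]
      rw [hp, hE, Real.exp_neg, Real.exp_neg]
      have q1 := (Real.exp_pos (a * L)).ne'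
      have q2 := (Real.exp_pos (a * Real.log y)).ne'
      generalize Real.exp (a * L) = A at *
      generalize Real.exp (a * Real.log y) = B at *
      have q3 : 1 - Real.log y / L = (L - Real.log y) / L := by field_simp
      rw [q3]
      have q4 := hLy.ne'
      field_simp
      ring
    · apply ContinuousOn.intervalIntegrable
      intro y hy
      obtain ⟨hy0, hyL⟩ := hle y hy
      apply ContinuousAt.continuousWithinAt
      have c1 := Real.continuousAt_log hy0.ne'
      have c2 : ContinuousAt (fun y : ℝ => y ^ (1 + a)) y :=
        Real.continuousAt_rpow_const _ _ (Or.inl hy0.ne')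
      refine c1.div (c2.mul (continuousAt_const.sub (c1.div_const L))) ?_
      have : Real.log y / L < 1 := (div_lt_one hL0).2 hyL
      have : 0 < y ^ (1 + a) := Real.rpow_pos_of_pos hy0 _
      apply mul_ne_zero this.ne'
      linarith
  rw [hint]
  simp only [Real.log_one, hlx]
  have hP := PP_nonpos hx
  unfold PP at hP
  rw [← ha, ← ha2] at hP
  have r1 : a * (L - (L - Real.log 2)) = a * Real.log 2 := by ring
  have r2 : Real.exp (-(a * (L - Real.log 2))) = Real.exp (a * Real.log 2) / Real.exp (a * L) := by
    rw [← Real.exp_sub]; ring_nf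
  rw [r1, r2, Real.exp_neg]
  simp only [sub_zero, mul_zero, neg_zero, Real.exp_zero]
  have q1 := Real.exp_pos (a * L)
  have hL1 : L - 1 = 2 * a * L := by linarith
  rw [hL1] at hP
  generalize Real.exp (a * L) = A at *
  generalize Real.exp (a * Real.log 2) = B at *
  generalize EE (a * L) = U at *
  generalize EE (a * Real.log 2) = V at *
  have key : (-(L ^ 2 * A⁻¹ * V) + L / a * (B / A)) - (-(L ^ 2 * A⁻¹ * U) + L / a * 1) - 5.961
      = L ^ 2 / A * (U - V - 5.961 * A / L ^ 2 - 2 * (A - B) / (2 * a * L)) := by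
    field_simp
    ring
  have := mul_nonpos_of_nonneg_of_nonpos (by positivity : 0 ≤ L ^ 2 / A) hP
  linarith

/-- For every real `x` with `log x ≥ 20`,
`∫₁^{x/2} (log y)/(y^{3/2 - 1/(2 log x)}(1 - log y/log x)) dy ≤ 5.961`. -/
theorem integral_log_bound (x : ℝ) (hx : 20 ≤ Real.log x) :
    ∫ y in (1 : ℝ)..(x / 2),
        Real.log y /
          (y ^ ((3 : ℝ) / 2 - 1 / (2 * Real.log x)) * (1 - Real.log y / Real.log x)) ≤
      5.961 := by
  rcases lt_trichotomy x 0 with h | h | h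
  · rw [intervalIntegral.integral_undef (neg_case x h hx)]
    norm_num
  · rw [h, Real.log_zero] at hx
    norm_num at hx
  · exact pos_case x h hx
end
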